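/- arXiv:2502.03768 — 3 statements merged into one kernel-verified Lean document; each statement's English description precedes it below -/
import Mathlib

section
/- The product of B-operators with strictly descending indices applied to the pseudo-vacuum expands into double β-Grothendieck polynomials: B_{N−1}(σ_1) B_{N−2}(σ_2) ⋯ B_1(σ_{N−1}) |Ω⟩ = ∑_{w ∈ S_N} G^β_w(σ_1,…,σ_{N−1}; ⊖t_1,…,⊖t_{N−1}) |ω_N w^{−1}⟩, where ω_N ∈ S_N is the longest permutation. -/
noncomputable section
open scoped BigOperators

variable {F : Type*}

/-- `x ⊖ y := (x - y)/(1 + β·y)`. -/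
def om [Field F] (β x y : F) : F := (x - y) / (1 + β * y)

/-- `⊖ t := -t/(1 + β·t)`. -/
def negOm [Field F] (β t : F) : F := (-t) / (1 + β * t)

/-- The R-matrix `R^{(n)}(x,y)` on `V ⊗ V`, `V = F^n`, with entries
`R_{ij,kl} = (1 + [k<l]·β(x⊖y)) δ_{il} δ_{jk} + [k>l]·(x⊖y) δ_{ik} δ_{jl}`;
the row index is the pair `(i,j)`, the column index is the pair `(k,l)`. -/
def Rmat [Field F] (n : ℕ) (β x y : F) :
    Matrix (Fin n × Fin n) (Fin n × Fin n) F := Matrix.of fun p q =>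
  (if p.1 = q.2 ∧ p.2 = q.1 then (if q.1 < q.2 then 1 + β * om β x y else 1) else 0) +
  (if p.1 = q.1 ∧ p.2 = q.2 ∧ q.2 < q.1 then om β x y else 0)

/-- `R_{a i}(u, τ)` : the R-matrix acting on the auxiliary space (first factor)
and the `i`-th site of `H = (F^n)^{⊗N}`, identity elsewhere. -/
def Rsite [Field F] (n N : ℕ) (β u τ : F) (i : Fin N) :
    Matrix (Fin n × (Fin N → Fin n)) (Fin n × (Fin N → Fin n)) F := Matrix.of fun p q =>
  Rmat n β u τ (p.1, p.2 i) (q.1, q.2 i) *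
    (if ∀ j, j ≠ i → p.2 j = q.2 j then 1 else 0)

/-- The monodromy matrix `T_a(u) = R_{aN}(u,t_N) ⋯ R_{a1}(u,t_1)` on `V_a ⊗ H`. -/
def Tmono [Field F] (n N : ℕ) (β u : F) (t : Fin N → F) :
    Matrix (Fin n × (Fin N → Fin n)) (Fin n × (Fin N → Fin n)) F :=
  ((List.ofFn fun i : Fin N => Rsite n N β u (t i) i).reverse).prod

/-- The block `T_a(u)_{r c}` (with respect to the auxiliary space) as an operator on `H`. -/
def blockOp [Field F] (n N : ℕ) (β u : F) (t : Fin N → F) (r c : Fin n) :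
    Matrix (Fin N → Fin n) (Fin N → Fin n) F :=
  Matrix.of fun s s' => Tmono n N β u t (r, s) (c, s')

/-- The natural basis vector `|n_1,…,n_N⟩` of `H` (also used as a dual basis covector). -/
def ket [Field F] (n N : ℕ) (g : Fin N → Fin n) : (Fin N → Fin n) → F :=
  fun s => if s = g then 1 else 0

/-- The Coxeter length of a permutation: its number of inversions. -/
def permLength {N : ℕ} (w : Equiv.Perm (Fin N)) : ℕ :=
  (Finset.univ.filter fun p : Fin N × Fin N => p.1 < p.2 ∧ w p.2 < w p.1).card

/-- The longest permutation `ω_N : i ↦ N - 1 - i`. -/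
def omegaPerm (N : ℕ) : Equiv.Perm (Fin N) :=
  ⟨Fin.rev, Fin.rev, fun i => Fin.rev_rev i, fun i => Fin.rev_rev i⟩

/-- `IsGroth M β G` says that the family `G`, indexed by `S_{M+1}`, satisfies the
defining recursion of the double β-Grothendieck polynomials:
`G_{ω}(x;y) = ∏_{i+j ≤ M+1} (x_i + y_j + β x_i y_j)` (1-based indices), and
`G_{w s_i}(x;y) = ∂^β_i G_w(x;y)` whenever `ℓ(w s_i) = ℓ(w) - 1`
(the β-divided difference acting on the x-variables). -/
def IsGroth [Field F] (M : ℕ) (β : F)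
    (G : Equiv.Perm (Fin (M + 1)) → (Fin (M + 1) → F) → (Fin (M + 1) → F) → F) : Prop :=
  (∀ x y : Fin (M + 1) → F,
      G (omegaPerm (M + 1)) x y =
        ∏ p ∈ Finset.univ.filter
            (fun p : Fin (M + 1) × Fin (M + 1) => (p.1 : ℕ) + (p.2 : ℕ) + 2 ≤ M + 1),
          (x p.1 + y p.2 + β * x p.1 * y p.2)) ∧
  (∀ (w : Equiv.Perm (Fin (M + 1))) (i : Fin M) (x y : Fin (M + 1) → F),
      permLength (w * Equiv.swap i.castSucc i.succ) + 1 = permLength w →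
      x i.castSucc ≠ x i.succ →
      G (w * Equiv.swap i.castSucc i.succ) x y =
        ((1 + β * x i.succ) * G w x y -
            (1 + β * x i.castSucc) * G w (fun j => x (Equiv.swap i.castSucc i.succ j)) y) /
          (x i.castSucc - x i.succ))

/-- The product `B_{N-1}(σ_1) B_{N-2}(σ_2) ⋯ B_1(σ_{N-1})` for `n = N = M+2`. -/
def descB [Field F] (M : ℕ) (β : F) (t : Fin (M + 2) → F) (σ : Fin (M + 1) → F) :
    Matrix (Fin (M + 2) → Fin (M + 2)) (Fin (M + 2) → Fin (M + 2)) F :=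
  (List.ofFn fun a : Fin (M + 1) =>
      blockOp (M + 2) (M + 2) β (σ a) t 0 (Fin.rev a).succ).prod

/-! ### Operators on functions -/

/-- The action of `Rsite` on functions. -/
def Rop [Field F] {n N : ℕ} (β u τ : F) (i : Fin N)
    (ψ : Fin n × (Fin N → Fin n) → F) : Fin n × (Fin N → Fin n) → F := fun p =>
  (if p.2 i < p.1 then 1 + β * om β u τ else 1) * ψ (p.2 i, Function.update p.2 i p.1) +
    (if p.2 i < p.1 then om β u τ else 0) * ψ p

lemma Rsite_apply [Field F] {n N : ℕ} (β u τ : F) (i : Fin N)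
    (p q : Fin n × (Fin N → Fin n)) :
    Rsite n N β u τ i p q =
      (if q = (p.2 i, Function.update p.2 i p.1) then
        (if p.2 i < p.1 then 1 + β * om β u τ else 1) else 0) +
      (if q = p then (if p.2 i < p.1 then om β u τ else 0) else 0) := by
  obtain ⟨a, g⟩ := p
  obtain ⟨b, h⟩ := q
  have e1 : ((b, h) = (g i, Function.update g i a)) ↔
      (a = h i ∧ g i = b) ∧ ∀ j, j ≠ i → g j = h j := by
    constructor
    · intro hh
      simp only [Prod.mk.injEq] at hh
      obtain ⟨rfl, rfl⟩ := hh
      refine ⟨by simp, fun j hj => by simp [hj]⟩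
    · rintro ⟨⟨h1, h2⟩, h3⟩
      simp only [Prod.mk.injEq]
      refine ⟨h2.symm, ?_⟩
      funext j
      by_cases hj : j = i
      · subst hj; simp [h1]
      · simp [hj, h3 j hj]
  have e2 : ((b, h) = (a, g)) ↔ (a = b ∧ g i = h i) ∧ ∀ j, j ≠ i → g j = h j := by
    constructor
    · intro hh
      simp only [Prod.mk.injEq] at hh
      obtain ⟨rfl, rfl⟩ := hh
      simp
    · rintro ⟨⟨h1, h2⟩, h3⟩
      simp only [Prod.mk.injEq]
      refine ⟨h1.symm, ?_⟩
      funext j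
      by_cases hj : j = i
      · subst hj; simp [h2]
      · simp [h3 j hj]
  simp only [Rsite, Rmat, Matrix.of_apply, e1, e2]
  by_cases hC : ∀ j, j ≠ i → g j = h j
  · rw [if_pos hC, mul_one]
    simp only [eq_true hC, and_true]
    congr 1
    · by_cases h1 : a = h i ∧ g i = b
      · obtain ⟨rfl, rfl⟩ := h1
        simp
      · simp [h1]
    · by_cases h1 : a = b ∧ g i = h i
      · obtain ⟨rfl, h2⟩ := h1
        simp [h2]
      · rw [if_neg h1, if_neg]
        tauto
  · simp [hC]

lemma Rsite_mulVec [Field F] {n N : ℕ} (β u τ : F) (i : Fin N)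
    (ψ : Fin n × (Fin N → Fin n) → F) :
    (Rsite n N β u τ i).mulVec ψ = Rop β u τ i ψ := by
  funext p
  simp only [Matrix.mulVec, dotProduct, Rsite_apply, add_mul, ite_mul, zero_mul,
    Finset.sum_add_distrib, Finset.sum_ite_eq', Finset.mem_univ, if_true, Rop]

/-- Partial monodromy. -/
def Tp [Field F] {n N : ℕ} (β u : F) (t : Fin N → F)
    (ψ : Fin n × (Fin N → Fin n) → F) : ℕ → Fin n × (Fin N → Fin n) → F
  | 0 => ψ
  | k + 1 => if h : k < N then Rop β u (t ⟨k, h⟩) ⟨k, h⟩ (Tp β u t ψ k) else Tp β u t ψ k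

lemma Tp_aux [Field F] {n N : ℕ} (β u : F) (t : Fin N → F)
    (ψ : Fin n × (Fin N → Fin n) → F) (k : ℕ) (hk : k ≤ N) :
    ((List.ofFn fun i : Fin k =>
      Rsite n N β u (t (Fin.castLE hk i)) (Fin.castLE hk i)).reverse).prod.mulVec ψ
      = Tp β u t ψ k := by
  induction k with
  | zero => simp [Tp]
  | succ k ih =>
    rw [List.ofFn_succ']
    simp only [List.concat_eq_append, List.reverse_append, List.reverse_singleton,
      List.singleton_append, List.prod_cons]
    rw [← Matrix.mulVec_mulVec]
    have := ih (by omega)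
    have hk' : k < N := hk
    simp only [Tp, hk', dif_pos]
    rw [← this, Rsite_mulVec]
    rfl

lemma Tmono_mulVec [Field F] {n N : ℕ} (β u : F) (t : Fin N → F)
    (ψ : Fin n × (Fin N → Fin n) → F) :
    (Tmono n N β u t).mulVec ψ = Tp β u t ψ N := by
  have := Tp_aux (n := n) β u t ψ N le_rfl
  simpa [Tmono] using this

/-- The action of `blockOp 0 c`. -/
def Bop [Field F] {n N : ℕ} (β u : F) (t : Fin N → F) (r c : Fin n)
    (φ : (Fin N → Fin n) → F) : (Fin N → Fin n) → F :=
  fun g => Tp β u t (fun p => if p.1 = c then φ p.2 else 0) N (r, g)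

lemma blockOp_mulVec [Field F] {n N : ℕ} (β u : F) (t : Fin N → F) (r c : Fin n)
    (φ : (Fin N → Fin n) → F) :
    (blockOp n N β u t r c).mulVec φ = Bop β u t r c φ := by
  funext g
  rw [Bop, ← Tmono_mulVec]
  simp only [Matrix.mulVec, dotProduct, blockOp, Matrix.of_apply, Fintype.sum_prod_type]
  rw [Finset.sum_eq_single c]
  · simp
  · intro b _ hb
    simp [hb]
  · simp

/-- Product of the `B` operators. -/
def Qv [Field F] {n N : ℕ} (β : F) (t : Fin N → F) (r : Fin n) :
    (m : ℕ) → (Fin m → F) → (Fin m → Fin n) → (Fin N → Fin n) → F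
  | 0, _, _ => ket n N fun _ => r
  | m + 1, s, c => Bop β (s 0) t r (c 0) (Qv β t r m (fun a => s a.succ) (fun a => c a.succ))

lemma Qv_eq [Field F] {n N : ℕ} (β : F) (t : Fin N → F) (r : Fin n)
    (m : ℕ) (s : Fin m → F) (c : Fin m → Fin n) :
    (List.ofFn fun a : Fin m => blockOp n N β (s a) t r (c a)).prod.mulVec (ket n N fun _ => r)
      = Qv β t r m s c := by
  induction m with
  | zero => simp [Qv]
  | succ m ih =>
    rw [List.ofFn_succ, List.prod_cons, ← Matrix.mulVec_mulVec, ih, blockOp_mulVec]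
    rfl

/-! ### Exchange of sites -/

/-- The site exchange operator. -/
def Aop [Field F] {n N : ℕ} (β v : F) (i j : Fin N)
    (ψ : Fin n × (Fin N → Fin n) → F) : Fin n × (Fin N → Fin n) → F := fun p =>
  (if p.2 i < p.2 j then 1 + β * v else 1) * ψ p +
    (if p.2 i < p.2 j then v else 0) * ψ (p.1, fun k => p.2 (Equiv.swap i j k))

lemma Aop_Rop_comm [Field F] {n N : ℕ} (β v u τ : F) (i j k : Fin N) (hi : k ≠ i) (hj : k ≠ j)
    (ψ : Fin n × (Fin N → Fin n) → F) :
    Aop β v i j (Rop β u τ k ψ) = Rop β u τ k (Aop β v i j ψ) := by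
  funext ⟨a, g⟩
  have e : Function.update (fun l => g (Equiv.swap i j l)) k a
      = fun l => Function.update g k a (Equiv.swap i j l) := by
    funext l
    by_cases hl : l = k
    · subst hl; simp [Equiv.swap_apply_of_ne_of_ne hi hj]
    · have : Equiv.swap i j l ≠ k := by
        intro h
        apply hl
        rw [← Equiv.swap_apply_of_ne_of_ne hi hj] at h
        exact (Equiv.swap i j).injective h
      simp [hl, this]
  simp only [Aop, Rop, Equiv.swap_apply_of_ne_of_ne hi hj, e, Function.update_of_ne hi.symm,
    Function.update_of_ne hj.symm]
  ring

lemma om_rel [Field F] (β u a b : F) (ha : 1 + β * a ≠ 0) (hb : 1 + β * b ≠ 0) :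
    om β u b = om β u a + om β a b + β * om β u a * om β a b := by
  simp only [om]
  rw [div_eq_iff hb]
  have e : (a - b) / (1 + β * b) * (1 + β * b) = a - b := div_mul_cancel₀ _ hb
  have e' : (u - a) / (1 + β * a) * (1 + β * a) = u - a := div_mul_cancel₀ _ ha
  linear_combination (- 1 - β * ((u - a) / (1 + β * a))) * e - e'

lemma Aop_YBE [Field F] {n N : ℕ} (β u a b : F) (ha : 1 + β * a ≠ 0) (hb : 1 + β * b ≠ 0)
    (i j : Fin N) (hij : i ≠ j) (ψ : Fin n × (Fin N → Fin n) → F) :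
    Aop β (om β a b) i j (Rop β u b j (Rop β u a i ψ)) =
      Rop β u a j (Rop β u b i (Aop β (om β a b) i j ψ)) := by
  funext ⟨c, g⟩
  obtain ⟨U, hU⟩ : ∃ U : Fin n → Fin n → Fin N → Fin n,
      U = fun x y => Function.update (Function.update g i x) j y := ⟨_, rfl⟩
  have f1 : ∀ x y, U x y i = x := fun x y => by simp [hU, hij]
  have f2 : ∀ x y, U x y j = y := fun x y => by simp [hU]
  have f5 : ∀ x y k, k ≠ i → k ≠ j → U x y k = g k := fun x y k h h' => by simp [hU, h, h']
  have key : ∀ h : Fin N → Fin n, (∀ k, k ≠ i → k ≠ j → h k = g k) → h = U (h i) (h j) := by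
    intro h hh
    funext k
    by_cases hk : k = j
    · subst hk; rw [f2]
    · by_cases hk' : k = i
      · subst hk'; rw [f1]
      · rw [f5 _ _ _ hk' hk, hh k hk' hk]
  have f3 : ∀ x y z, Function.update (U x y) i z = U z y := by
    intro x y z
    rw [key (Function.update (U x y) i z)]
    · simp [hij.symm, f2]
    · intro k h h'; simp [h, f5 _ _ _ h h']
  have f4 : ∀ x y z, Function.update (U x y) j z = U x z := by
    intro x y z
    rw [key (Function.update (U x y) j z)]
    · simp [hij, f1]
    · intro k h h'; simp [h', f5 _ _ _ h h']
  have f6 : ∀ x y, (fun k => U x y (Equiv.swap i j k)) = U y x := by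
    intro x y
    rw [key (fun k => U x y (Equiv.swap i j k))]
    · simp [f1, f2]
    · intro k h h'; simp [Equiv.swap_apply_of_ne_of_ne h h', f5 _ _ _ h h']
  rw [key g fun _ _ _ => rfl]
  generalize g i = x
  generalize g j = y
  simp only [Aop, Rop, f1, f2, f3, f4, f6, Equiv.swap_apply_left, Equiv.swap_apply_right]
  clear key f1 f2 f3 f4 f5 f6 hU hij
  rw [om_rel β u a b ha hb]
  generalize om β a b = v
  generalize om β u a = w
  rcases lt_trichotomy x y with h1 | h1 | h1
  all_goals rcases lt_trichotomy x c with h2 | h2 | h2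
  all_goals rcases lt_trichotomy y c with h3 | h3 | h3
  all_goals try subst h1
  all_goals try subst h2
  all_goals try subst h3
  all_goals first
    | (exfalso; order)
    | (simp only [*, lt_irrefl, not_lt_of_gt, if_true, if_false]; try ring)

lemma Aop_Tp_le [Field F] {n N : ℕ} (β v u : F) (t t' : Fin N → F) (i j : Fin N) (hij : i ≤ j)
    (ht : ∀ k, k ≠ i → k ≠ j → t' k = t k)
    (ψ : Fin n × (Fin N → Fin n) → F) (k : ℕ) (hk : k ≤ i) :
    Aop β v i j (Tp β u t ψ k) = Tp β u t' (Aop β v i j ψ) k := by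
  induction k with
  | zero => rfl
  | succ k ih =>
    have hkN : k < N := by omega
    have h1 : (⟨k, hkN⟩ : Fin N) ≠ i := by
      intro h; have := congrArg Fin.val h; simp only at this; omega
    have h2 : (⟨k, hkN⟩ : Fin N) ≠ j := by
      intro h; have := congrArg Fin.val h; have : (i : ℕ) ≤ j := hij; simp at *; omega
    simp only [Tp, hkN, dif_pos]
    rw [Aop_Rop_comm _ _ _ _ _ _ _ h1 h2, ih (by omega), ht _ h1 h2]

lemma Aop_Tp [Field F] {n N : ℕ} (β u : F) (t t' : Fin N → F) (i j : Fin N)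
    (hij : (j : ℕ) = i + 1)
    (hi : 1 + β * t i ≠ 0) (hj : 1 + β * t j ≠ 0)
    (ht : ∀ k, k ≠ i → k ≠ j → t' k = t k) (hti : t' i = t j) (htj : t' j = t i)
    (ψ : Fin n × (Fin N → Fin n) → F) (d : ℕ) :
    Aop β (om β (t i) (t j)) i j (Tp β u t ψ (i + 2 + d)) =
      Tp β u t' (Aop β (om β (t i) (t j)) i j ψ) (i + 2 + d) := by
  induction d with
  | zero =>
    have h1 : (i : ℕ) < N := i.2
    have h2 : (i : ℕ) + 1 < N := by have := j.2; omega
    have h3 : (⟨(i : ℕ) + 1, h2⟩ : Fin N) = j := Fin.ext hij.symm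
    have hne : i ≠ j := by intro h; rw [h] at hij; omega
    simp only [Tp, h1, h2, dif_pos, h3, Fin.eta]
    rw [Aop_YBE _ _ _ _ hi hj _ _ hne, Aop_Tp_le β _ u t t' i j (by
      show (i : ℕ) ≤ j; omega) ht ψ i le_rfl, hti, htj]
  | succ d ih =>
    rw [← add_assoc]
    by_cases hkN : (i : ℕ) + 2 + d < N
    · have h1 : (⟨(i : ℕ) + 2 + d, hkN⟩ : Fin N) ≠ i := by
        intro h; have := congrArg Fin.val h; simp only at this; omega
      have h2 : (⟨(i : ℕ) + 2 + d, hkN⟩ : Fin N) ≠ j := by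
        intro h; have := congrArg Fin.val h; simp only at this; omega
      rw [Tp, Tp, dif_pos hkN, dif_pos hkN, Aop_Rop_comm _ _ _ _ _ _ _ h1 h2, ih, ht _ h1 h2]
    · rw [Tp, Tp, dif_neg hkN, dif_neg hkN, ih]

/-- Site exchange on vectors. -/
def Av [Field F] {n N : ℕ} (β v : F) (i j : Fin N)
    (φ : (Fin N → Fin n) → F) : (Fin N → Fin n) → F := fun g =>
  (if g i < g j then 1 + β * v else 1) * φ g +
    (if g i < g j then v else 0) * φ (fun k => g (Equiv.swap i j k))

lemma Av_Bop [Field F] {n N : ℕ} (β u : F) (t t' : Fin N → F) (i j : Fin N)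
    (hij : (j : ℕ) = i + 1)
    (hi : 1 + β * t i ≠ 0) (hj : 1 + β * t j ≠ 0)
    (ht : ∀ k, k ≠ i → k ≠ j → t' k = t k) (hti : t' i = t j) (htj : t' j = t i)
    (r c : Fin n) (φ : (Fin N → Fin n) → F) :
    Av β (om β (t i) (t j)) i j (Bop β u t r c φ) =
      Bop β u t' r c (Av β (om β (t i) (t j)) i j φ) := by
  funext g
  obtain ⟨d, hd⟩ : ∃ d, N = i + 2 + d := ⟨N - (i + 2), by have := j.2; omega⟩
  have := congrFun (Aop_Tp β u t t' i j hij hi hj ht hti htj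
    (fun p : Fin n × (Fin N → Fin n) => if p.1 = c then φ p.2 else 0) d) (r, g)
  rw [← hd] at this
  have e : Aop β (om β (t i) (t j)) i j
      (fun p : Fin n × (Fin N → Fin n) => if p.1 = c then φ p.2 else 0) =
      fun p => if p.1 = c then Av β (om β (t i) (t j)) i j φ p.2 else 0 := by
    funext p
    by_cases h : p.1 = c <;> simp [Aop, Av, h]
  rw [e] at this
  exact this

lemma Av_Qv [Field F] {n N : ℕ} (β : F) (t t' : Fin N → F) (i j : Fin N)
    (hij : (j : ℕ) = i + 1)
    (hi : 1 + β * t i ≠ 0) (hj : 1 + β * t j ≠ 0)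
    (ht : ∀ k, k ≠ i → k ≠ j → t' k = t k) (hti : t' i = t j) (htj : t' j = t i)
    (r : Fin n) (m : ℕ) (s : Fin m → F) (c : Fin m → Fin n) :
    Av β (om β (t i) (t j)) i j (Qv β t r m s c) = Qv β t' r m s c := by
  induction m with
  | zero =>
    funext g
    simp only [Qv, Av, ket]
    have e : (fun k => g (Equiv.swap i j k)) = (fun _ => r) ↔ g = fun _ => r := by
      constructor
      · intro h
        funext k
        have := congrFun h (Equiv.swap i j k)
        simpa using this
      · rintro rfl; rfl
    simp only [e]
    by_cases hg : g = fun _ => r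
    · subst hg; simp
    · simp [hg]
  | succ m ih =>
    rw [Qv, Qv, Av_Bop β _ t t' i j hij hi hj ht hti htj, ih]

/-! ### Support -/

lemma map_update_cons {n N : ℕ} (g : Fin N → Fin n) (i : Fin N) (a : Fin n) :
    g i ::ₘ (Finset.univ.val.map (Function.update g i a)) = a ::ₘ Finset.univ.val.map g := by
  have h : (Finset.univ : Finset (Fin N)).val = i ::ₘ (Finset.univ.erase i).val := by
    rw [← Finset.insert_val_of_notMem (Finset.notMem_erase i _),
      Finset.insert_erase (Finset.mem_univ i)]
  rw [h, Multiset.map_cons, Multiset.map_cons, Multiset.cons_swap]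
  simp only [Function.update_self]
  congr 2
  apply Multiset.map_congr rfl
  intro x hx
  have : x ≠ i := Finset.ne_of_mem_erase (Finset.mem_val.mp hx)
  simp [this]

lemma Tp_support [Field F] {n N : ℕ} (β u : F) (t : Fin N → F)
    (ψ : Fin n × (Fin N → Fin n) → F) (S : Multiset (Fin n))
    (h : ∀ p, ψ p ≠ 0 → p.1 ::ₘ Finset.univ.val.map p.2 = S) (k : ℕ) :
    ∀ p, Tp β u t ψ k p ≠ 0 → p.1 ::ₘ Finset.univ.val.map p.2 = S := by
  induction k with
  | zero => exact h
  | succ k ih =>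
    intro p hp
    by_cases hk : k < N
    · simp only [Tp, hk, dif_pos, Rop] at hp
      by_cases h1 : Tp β u t ψ k p = 0
      · rw [h1, mul_zero, add_zero] at hp
        rw [← ih _ (right_ne_zero_of_mul hp), map_update_cons]
      · exact ih p h1
    · simp only [Tp, hk, dif_neg, not_false_eq_true] at hp
      exact ih p hp

lemma Qv_support [Field F] {n N : ℕ} (β : F) (t : Fin N → F) (r : Fin n)
    (m : ℕ) (s : Fin m → F) (c : Fin m → Fin n) (g : Fin N → Fin n) (hg : Qv β t r m s c g ≠ 0) :
    Finset.univ.val.map g + Multiset.replicate m r =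
      Multiset.replicate N r + Finset.univ.val.map c := by
  induction m generalizing g with
  | zero =>
    simp only [Qv, ket] at hg
    have : g = fun _ => r := by by_contra h; simp [h] at hg
    subst this
    simp
  | succ m ih =>
    rw [Qv, Bop] at hg
    have key := ih (fun a => s a.succ) (fun a => c a.succ)
    have := Tp_support β (s 0) t (fun p : Fin n × (Fin N → Fin n) => if p.1 = c 0 then
      (Qv β t r m (fun a => s a.succ) (fun a => c a.succ)) p.2 else 0)
      (c 0 ::ₘ (Multiset.replicate N r + Finset.univ.val.map (fun a : Fin m => c a.succ) 
        - Multiset.replicate m r)) (by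
        intro p hp
        by_cases h : p.1 = c 0
        · simp only [h, if_true] at hp
          rw [← key _ hp, h]; simp
        · simp [h] at hp) N _ hg
    simp only at this
    have hle : Multiset.replicate m r ≤ 
        Multiset.replicate N r + Finset.univ.val.map (fun a : Fin m => c a.succ) := by
      by_contra hcon
      apply hg
      have hz : Qv β t r m (fun a => s a.succ) (fun a => c a.succ) = fun _ => 0 := by
        funext g
        by_contra h
        exact hcon (key g h ▸ Multiset.le_add_left _ _)
      have hz' : ∀ k, Tp β (s 0) t (fun p : Fin n × (Fin N → Fin n) => 0) k = fun _ => 0 := by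
        intro k
        induction k with
        | zero => rfl
        | succ k ih => simp only [Tp, ih]; split_ifs <;> (funext p; simp [Rop])
      simp only [hz, ite_self, hz']
    rw [Multiset.replicate_succ, Multiset.add_cons, ← Multiset.cons_add, this, Multiset.cons_add,
      Multiset.sub_add_cancel hle, ← Multiset.add_cons, Fin.univ_succ, Finset.cons_val,
      Finset.map_val, Multiset.map_cons, Multiset.map_map]
    rfl

lemma Qv_injective [Field F] (M : ℕ) (β : F) (t : Fin (M + 2) → F) (σ : Fin (M + 1) → F)
    (g : Fin (M + 2) → Fin (M + 2))
    (hg : Qv β t 0 (M + 1) σ (fun a => (Fin.rev a).succ) g ≠ 0) : Function.Injective g := by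
  have h := Qv_support _ _ _ _ _ _ _ hg
  rw [Multiset.replicate_succ _ (M + 1), Multiset.cons_add,
    add_comm (Finset.univ.val.map g), ← Multiset.add_cons] at h
  have h := add_left_cancel h
  have hn : (Finset.univ.val.map g).Nodup := by
    rw [h, Multiset.nodup_cons]
    constructor
    · simp only [Multiset.mem_map, not_exists, not_and]
      intro a _ ha
      exact Fin.succ_ne_zero _ ha
    · exact Multiset.Nodup.map (fun a b hab => by simpa using hab) Finset.univ.nodup
  have := Multiset.inj_on_of_nodup_map hn
  intro a b hab
  exact this a (Finset.mem_univ_val a) b (Finset.mem_univ_val b) hab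

/-! ### The base coefficient -/

/-- The state `0,1,…,c,0,…,0`. -/
def idv (N c : ℕ) : Fin N → Fin N := fun j => if (j : ℕ) ≤ c then j else ⟨0, by have := j.2; omega⟩

lemma Tp_zero_of [Field F] {n N : ℕ} (β u : F) (t : Fin N → F) (c : Fin n)
    (φ : (Fin N → Fin n) → F) (k : ℕ) (a : Fin n) (g : Fin N → Fin n) (ha : a ≠ c)
    (hg : ∀ j : Fin N, (j : ℕ) < k → g j ≠ c) :
    Tp β u t (fun p => if p.1 = c then φ p.2 else 0) k (a, g) = 0 := by
  induction k generalizing a g with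
  | zero => simp [Tp, ha]
  | succ k ih =>
    by_cases hk : k < N
    · simp only [Tp, hk, dif_pos, Rop]
      rw [ih a g ha (fun j hj => hg j (by omega)), ih _ _ (hg ⟨k, hk⟩ (by simp)), mul_zero,
        mul_zero, add_zero]
      intro j hj
      have : j ≠ ⟨k, hk⟩ := by intro h; rw [h] at hj; simp at hj
      rw [Function.update_of_ne this]
      exact hg j (by omega)
    · simp only [Tp, hk, dif_neg, not_false_eq_true]
      exact ih a g ha (fun j hj => hg j (by omega))

lemma Tp_straight [Field F] {N : ℕ} (β u : F) (t : Fin N → F) (c : Fin N)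
    (φ : (Fin N → Fin N) → F) (k : ℕ) (g : Fin N → Fin N) (hk : k ≤ c)
    (hg : ∀ j : Fin N, (j : ℕ) < k → g j = j) :
    Tp β u t (fun p => if p.1 = c then φ p.2 else 0) k (c, g) =
      (∏ j : Fin N, if (j : ℕ) < k then om β u (t j) else 1) * φ g := by
  induction k with
  | zero => simp [Tp]
  | succ k ih =>
    have hkN : k < N := by have := c.2; omega
    have hgk : g ⟨k, hkN⟩ = ⟨k, hkN⟩ := hg _ (by simp)
    have hlt : (⟨k, hkN⟩ : Fin N) < c := by show k < (c : ℕ); omega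
    simp only [Tp, hkN, dif_pos, Rop, hgk, hlt, if_true]
    rw [ih (by omega) (fun j hj => hg j (by omega)), Tp_zero_of _ _ _ _ _ _ _ _ hlt.ne, mul_zero,
      zero_add, ← mul_assoc]
    · congr 1
      rw [← Finset.prod_erase_mul _ _ (Finset.mem_univ (⟨k, hkN⟩ : Fin N)),
        ← Finset.prod_erase_mul (a := (⟨k, hkN⟩ : Fin N)) (s := Finset.univ) (h := Finset.mem_univ _)
          (f := fun j : Fin N => if (j : ℕ) < k + 1 then om β u (t j) else 1)]
      simp only [lt_irrefl, if_false, mul_one, Nat.lt_succ_self, if_true]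
      rw [mul_comm]
      congr 1
      apply Finset.prod_congr rfl
      intro j hj
      have h1 : j ≠ ⟨k, hkN⟩ := Finset.ne_of_mem_erase hj
      have h2 : (j : ℕ) ≠ k := fun h => h1 (Fin.ext h)
      have : ((j : ℕ) < k + 1) ↔ (j : ℕ) < k := by omega
      simp only [this]
    · intro j hj
      have : j ≠ ⟨k, hkN⟩ := by intro h; rw [h] at hj; simp at hj
      rw [Function.update_of_ne this, hg j (by omega)]
      intro h
      rw [h] at hj
      omega

lemma Tp_tail [Field F] {n N : ℕ} (β u : F) (t : Fin N → F) (a : Fin n)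
    (ψ : Fin n × (Fin N → Fin n) → F) (k d : ℕ) (g : Fin N → Fin n)
    (hg : ∀ j : Fin N, k ≤ (j : ℕ) → g j = a) :
    Tp β u t ψ (k + d) (a, g) = Tp β u t ψ k (a, g) := by
  induction d with
  | zero => rfl
  | succ d ih =>
    rw [← add_assoc, Tp]
    by_cases hk : k + d < N
    · have h := hg ⟨k + d, hk⟩ (by simp)
      have h' : Function.update g ⟨k + d, hk⟩ a = g := by
        conv_lhs => rw [← h]
        exact Function.update_eq_self _ _
      simp [hk, Rop, h, h', ih]
    · simp [hk, ih]

lemma Bop_idv [Field F] {N : ℕ} (β u : F) (t : Fin (N + 1) → F) (m : ℕ) (c : Fin (N + 1))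
    (hc : (c : ℕ) = m + 1) (φ : (Fin (N + 1) → Fin (N + 1)) → F) :
    Bop β u t 0 c φ (idv (N + 1) (m + 1)) =
      (∏ j : Fin (N + 1), if (j : ℕ) < m + 1 then om β u (t j) else 1) * φ (idv (N + 1) m) := by
  have hcN := c.2
  obtain ⟨d, hd⟩ : ∃ d, N + 1 = m + 1 + 1 + d := ⟨N + 1 - (m + 2), by omega⟩
  have hlast : ∀ j : Fin (N + 1), m + 1 + 1 ≤ (j : ℕ) → idv (N + 1) (m + 1) j = 0 := by
    intro j hj
    simp only [idv]
    rw [if_neg (by omega)]; rfl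
  have h1 : m + 1 < N + 1 := by omega
  have hce : (⟨m + 1, h1⟩ : Fin (N + 1)) = c := Fin.ext hc.symm
  have hidc : idv (N + 1) (m + 1) c = c := by simp [idv, hc]
  have hup : Function.update (idv (N + 1) (m + 1)) c 0 = idv (N + 1) m := by
    funext j
    by_cases hj : j = c
    · subst hj; simp [idv, hc]
    · have : (j : ℕ) ≠ m + 1 := fun h => hj (Fin.ext (h.trans hc.symm))
      have e : (j : ℕ) ≤ m + 1 ↔ (j : ℕ) ≤ m := by omega
      simp [hj, idv, e]
  rw [Bop]
  conv_lhs => rw [show Tp β u t (fun p : Fin (N + 1) × (Fin (N + 1) → Fin (N + 1)) =>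
    if p.1 = c then φ p.2 else 0) (N + 1) = Tp β u t (fun p => if p.1 = c then φ p.2 else 0)
      (m + 1 + 1 + d) by rw [← hd]]
  rw [Tp_tail _ _ _ _ _ _ _ _ hlast, Tp, dif_pos h1]
  simp only [Rop, hce, hidc, Fin.not_lt_zero, if_false, one_mul, zero_mul, add_zero, hup]
  rw [Tp_straight _ _ _ _ _ _ _ hc.ge]
  intro j hj
  simp only [idv]
  rw [if_pos (by omega)]

lemma Qv_idv [Field F] {N : ℕ} (β : F) (t : Fin (N + 1) → F) (m : ℕ) (hm : m ≤ N)
    (s : Fin m → F) (c : Fin m → Fin (N + 1)) (hc : ∀ a, (c a : ℕ) + a = m) :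
    Qv β t 0 m s c (idv (N + 1) m) =
      ∏ a : Fin m, ∏ j : Fin (N + 1), if (j : ℕ) + a < m then om β (s a) (t j) else 1 := by
  induction m with
  | zero =>
    simp only [Qv, ket, Finset.univ_eq_empty, Finset.prod_empty]
    rw [if_pos]
    funext j
    by_cases h : (j : ℕ) ≤ 0
    · simp [idv, h]; try exact Fin.ext (by simpa using h)
    · simp [idv, h]
  | succ m ih =>
    rw [Qv, Bop_idv _ _ _ _ _ (by simpa using hc 0),
      Fin.prod_univ_succ (n := m),
      ih (by omega) _ _ (fun a => by have := hc a.succ; simp at this; omega)]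
    congr 1
    apply Finset.prod_congr rfl
    intro a _
    apply Finset.prod_congr rfl
    intro j _
    have : (j : ℕ) + (a.succ : Fin (m + 1)) < m + 1 ↔ (j : ℕ) + a < m := by simp; omega
    simp only [this]

/-! ### Permutations -/

lemma swap_lt {M : ℕ} (i : Fin M) (a b : Fin (M + 1)) (h : a < b)
    (hn : ¬ (a = i.castSucc ∧ b = i.succ)) :
    Equiv.swap i.castSucc i.succ a < Equiv.swap i.castSucc i.succ b := by
  simp only [Equiv.swap_apply_def]
  split_ifs <;> simp only [Fin.ext_iff, Fin.lt_def, Fin.val_castSucc, Fin.val_succ] at * <;> omega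

lemma permLength_asc {M : ℕ} (w : Equiv.Perm (Fin (M + 1))) (i : Fin M)
    (h : w i.castSucc < w i.succ) :
    permLength (w * Equiv.swap i.castSucc i.succ) = permLength w + 1 := by
  set s := Equiv.swap i.castSucc i.succ with hs
  have hss : ∀ a, s (s a) = a := fun a => by simp [hs]
  have hsl : ∀ a b, a < b → ¬ (a = i.castSucc ∧ b = i.succ) → s a < s b := swap_lt i
  have hi : i.castSucc < i.succ := Fin.castSucc_lt_succ
  have e : (Finset.univ.filter fun p : Fin (M + 1) × Fin (M + 1) =>
        p.1 < p.2 ∧ (w * s) p.2 < (w * s) p.1) =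
      insert (i.castSucc, i.succ) ((Finset.univ.filter fun p : Fin (M + 1) × Fin (M + 1) =>
        p.1 < p.2 ∧ w p.2 < w p.1).map (Equiv.prodCongr s s).toEmbedding) := by
    ext ⟨a, b⟩
    simp only [Finset.mem_filter, Finset.mem_univ, true_and, Finset.mem_insert, Finset.mem_map,
      Prod.exists, Prod.mk.injEq, Equiv.coe_toEmbedding, Equiv.prodCongr_apply, Prod.map_apply]
    simp only [Equiv.Perm.mul_apply]
    constructor
    · rintro ⟨h1, h2⟩
      by_cases hab : a = i.castSucc ∧ b = i.succ
      · exact Or.inl hab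
      · exact Or.inr ⟨s a, s b, ⟨hsl a b h1 hab, h2⟩, hss a, hss b⟩
    · rintro (⟨rfl, rfl⟩ | ⟨a', b', ⟨h1, h2⟩, rfl, rfl⟩)
      · exact ⟨hi, by simpa [hs] using h⟩
      · rw [hss, hss]
        refine ⟨hsl a' b' h1 ?_, h2⟩
        rintro ⟨rfl, rfl⟩
        exact absurd h2 (not_lt_of_gt h)
  rw [permLength, e, Finset.card_insert_of_notMem, Finset.card_map, permLength]
  simp only [Finset.mem_filter, Finset.mem_univ, true_and, Finset.mem_map, Prod.exists,
    Prod.mk.injEq, Equiv.coe_toEmbedding, Equiv.prodCongr_apply, Prod.map_apply, not_exists,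
    not_and]
  rintro a b ⟨h1, h2⟩ h3 h4
  have h5 : a = i.succ := by rw [← hss a, h3]; simp [hs]
  have h6 : b = i.castSucc := by rw [← hss b, h4]; simp [hs]
  rw [h5, h6] at h1
  exact absurd h1 (not_lt_of_gt hi)

lemma permLength_desc {M : ℕ} (w : Equiv.Perm (Fin (M + 1))) (i : Fin M)
    (h : w i.succ < w i.castSucc) :
    permLength (w * Equiv.swap i.castSucc i.succ) + 1 = permLength w := by
  have := permLength_asc (w * Equiv.swap i.castSucc i.succ) i (by simpa using h)
  rw [mul_assoc, Equiv.swap_mul_self, mul_one] at this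
  exact this.symm

lemma permLength_or {M : ℕ} (w : Equiv.Perm (Fin (M + 1))) (i : Fin M) :
    permLength (w * Equiv.swap i.castSucc i.succ) = permLength w + 1 ∨
    permLength (w * Equiv.swap i.castSucc i.succ) + 1 = permLength w := by
  have hi : i.castSucc ≠ i.succ := (Fin.castSucc_lt_succ).ne
  rcases lt_trichotomy (w i.castSucc) (w i.succ) with h | h | h
  · exact Or.inl (permLength_asc w i h)
  · exact absurd (w.injective h) hi
  · exact Or.inr (permLength_desc w i h)

lemma permLength_inv {N : ℕ} (w : Equiv.Perm (Fin N)) : permLength w⁻¹ = permLength w := by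
  unfold permLength
  apply Finset.card_bij (fun p _ => (w⁻¹ p.2, w⁻¹ p.1))
  · rintro ⟨a, b⟩ h
    simpa [and_comm] using h
  · rintro ⟨a, b⟩ _ ⟨c, d⟩ _ h
    simpa [and_comm] using h
  · rintro ⟨a, b⟩ h
    refine ⟨(w b, w a), ?_, by simp⟩
    simpa [and_comm] using h

lemma permLength_or_left {M : ℕ} (w : Equiv.Perm (Fin (M + 1))) (i : Fin M) :
    permLength (Equiv.swap i.castSucc i.succ * w) = permLength w + 1 ∨
    permLength (Equiv.swap i.castSucc i.succ * w) + 1 = permLength w := by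
  have := permLength_or w⁻¹ i
  rwa [← permLength_inv (Equiv.swap i.castSucc i.succ * w), mul_inv_rev, Equiv.swap_inv,
    ← permLength_inv w]

lemma exists_asc {M : ℕ} (w : Equiv.Perm (Fin (M + 1))) (hw : w ≠ omegaPerm (M + 1)) :
    ∃ i : Fin M, w i.castSucc < w i.succ := by
  by_contra hcon
  push Not at hcon
  apply hw
  have hanti : StrictAnti w := by
    rw [Fin.strictAnti_iff_succ_lt]
    intro i
    refine lt_of_le_of_ne (hcon i) ?_
    intro h
    exact (Fin.castSucc_lt_succ (i := i)).ne' (w.injective h)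
  have hm : StrictMono (fun a => Fin.rev (w a)) := by
    intro a b hab
    exact Fin.rev_lt_rev.mpr (hanti hab)
  have := (StrictMono.range_inj hm strictMono_id).mp (by
    rw [Set.range_id]
    exact (Fin.rev_surjective.comp w.surjective).range_eq)
  ext a : 1
  have h := congrFun this a
  simp only [id] at h
  show w a = Fin.rev a
  rw [← Fin.rev_rev (w a), h]

lemma down_induction {M : ℕ} (P : Equiv.Perm (Fin (M + 1)) → Prop)
    (h0 : P (omegaPerm (M + 1)))
    (hs : ∀ w (i : Fin M), w i.castSucc < w i.succ →
      P (w * Equiv.swap i.castSucc i.succ) → P w) (w) : P w := by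
  have hb : ∀ w : Equiv.Perm (Fin (M + 1)),
      permLength w ≤ (Finset.univ : Finset (Fin (M + 1) × Fin (M + 1))).card :=
    fun w => Finset.card_le_card (Finset.filter_subset _ _)
  generalize (Finset.univ : Finset (Fin (M + 1) × Fin (M + 1))).card = C at hb
  obtain ⟨d, hd⟩ : ∃ d, permLength w + d = C := ⟨C - permLength w, by have := hb w; omega⟩
  induction d generalizing w with
  | zero =>
    by_cases hw : w = omegaPerm (M + 1)
    · rw [hw]; exact h0
    · obtain ⟨i, hi⟩ := exists_asc w hw
      have := permLength_asc w i hi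
      have := hb (w * Equiv.swap i.castSucc i.succ)
      omega
  | succ d ih =>
    by_cases hw : w = omegaPerm (M + 1)
    · rw [hw]; exact h0
    · obtain ⟨i, hi⟩ := exists_asc w hw
      have := permLength_asc w i hi
      exact hs w i hi (ih _ (by omega))

lemma omega_inv (N : ℕ) : (omegaPerm N)⁻¹ = omegaPerm N := rfl

lemma down_induction_left {M : ℕ} (P : Equiv.Perm (Fin (M + 1)) → Prop)
    (h0 : P (omegaPerm (M + 1)))
    (hs : ∀ w (i : Fin M), w⁻¹ i.castSucc < w⁻¹ i.succ →
      P (Equiv.swap i.castSucc i.succ * w) → P w) (w) : P w := by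
  have := down_induction (fun v => P v⁻¹) (by simpa [omega_inv] using h0) (by
    intro v i hi hP
    apply hs v⁻¹ i (by simpa using hi)
    simpa using hP) w⁻¹
  simpa using this

/-! ### Grothendieck polynomials -/

/-- The reduced staircase product. -/
def stairP [Field F] {M : ℕ} (β : F) (i : Fin M) (x y : Fin (M + 1) → F) : F :=
  ∏ p ∈ (Finset.univ.filter
      (fun p : Fin (M + 1) × Fin (M + 1) => (p.1 : ℕ) + (p.2 : ℕ) + 2 ≤ M + 1)).erase
        (i.rev.castSucc, i.castSucc), (x p.1 + y p.2 + β * x p.1 * y p.2)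

lemma stair_eq [Field F] {M : ℕ} (β : F) (i : Fin M) (x y : Fin (M + 1) → F) :
    ∏ p ∈ Finset.univ.filter
      (fun p : Fin (M + 1) × Fin (M + 1) => (p.1 : ℕ) + (p.2 : ℕ) + 2 ≤ M + 1),
      (x p.1 + y p.2 + β * x p.1 * y p.2) =
    (x i.rev.castSucc + y i.castSucc + β * x i.rev.castSucc * y i.castSucc) * stairP β i x y := by
  refine (Finset.mul_prod_erase _ (fun p : Fin (M + 1) × Fin (M + 1) =>
    x p.1 + y p.2 + β * x p.1 * y p.2) (a := (i.rev.castSucc, i.castSucc)) ?_).symm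
  simp only [Finset.mem_filter, Finset.mem_univ, true_and, Fin.val_castSucc, Fin.val_rev]
  omega

lemma stairP_x [Field F] {M : ℕ} (β : F) (i : Fin M) (x y : Fin (M + 1) → F) :
    stairP β i (fun j => x (Equiv.swap i.rev.castSucc i.rev.succ j)) y = stairP β i x y := by
  unfold stairP
  apply Finset.prod_equiv
    (Equiv.prodCongr (Equiv.swap i.rev.castSucc i.rev.succ) (Equiv.refl (Fin (M + 1))))
  · rintro ⟨a, b⟩
    have hi := i.2
    simp only [Finset.mem_erase, Finset.mem_filter, Finset.mem_univ, true_and, ne_eq,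
      Prod.mk.injEq, Equiv.prodCongr_apply, Prod.map_apply, Equiv.refl_apply,
      Equiv.swap_apply_def]
    split_ifs <;> simp_all [Fin.ext_iff, Fin.val_rev] <;> omega
  · rintro ⟨a, b⟩ _
    simp

lemma stairP_y [Field F] {M : ℕ} (β : F) (i : Fin M) (x y : Fin (M + 1) → F) :
    stairP β i x (fun j => y (Equiv.swap i.castSucc i.succ j)) = stairP β i x y := by
  unfold stairP
  apply Finset.prod_equiv
    (Equiv.prodCongr (Equiv.refl (Fin (M + 1))) (Equiv.swap i.castSucc i.succ))
  · rintro ⟨a, b⟩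
    have hi := i.2
    simp only [Finset.mem_erase, Finset.mem_filter, Finset.mem_univ, true_and, ne_eq,
      Prod.mk.injEq, Equiv.prodCongr_apply, Prod.map_apply, Equiv.refl_apply,
      Equiv.swap_apply_def]
    split_ifs <;> simp_all [Fin.ext_iff, Fin.val_rev] <;> omega
  · rintro ⟨a, b⟩ _
    simp

lemma omega_swap {M : ℕ} (i : Fin M) :
    Equiv.swap i.castSucc i.succ * omegaPerm (M + 1) =
      omegaPerm (M + 1) * Equiv.swap i.rev.castSucc i.rev.succ := by
  have h := Equiv.mul_swap_eq_swap_mul (omegaPerm (M + 1)) i.rev.castSucc i.rev.succ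
  rw [h]
  have h1 : omegaPerm (M + 1) i.rev.castSucc = i.succ := by
    show Fin.rev _ = _
    rw [Fin.rev_castSucc, Fin.rev_rev]
  have h2 : omegaPerm (M + 1) i.rev.succ = i.castSucc := by
    show Fin.rev _ = _
    rw [Fin.rev_succ, Fin.rev_rev]
  rw [h1, h2, Equiv.swap_comm]

lemma G_left [Field F] {M : ℕ} {β : F}
    {G : Equiv.Perm (Fin (M + 1)) → (Fin (M + 1) → F) → (Fin (M + 1) → F) → F}
    (hG : IsGroth M β G) (w : Equiv.Perm (Fin (M + 1))) : ∀ i : Fin M,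
    permLength (Equiv.swap i.castSucc i.succ * w) + 1 = permLength w →
    ∀ x y : Fin (M + 1) → F, Function.Injective x → y i.castSucc ≠ y i.succ →
      G (Equiv.swap i.castSucc i.succ * w) x y =
        ((1 + β * y i.succ) * G w x y -
            (1 + β * y i.castSucc) * G w x (fun j => y (Equiv.swap i.castSucc i.succ j))) /
          (y i.castSucc - y i.succ) := by
  induction w using down_induction with
  | h0 =>
    intro i hl x y hx hy
    have hxne : x i.rev.castSucc ≠ x i.rev.succ := fun h =>
      (Fin.castSucc_lt_succ (i := i.rev)).ne (hx h)
    rw [omega_swap] at hl ⊢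
    have h0 : ∀ x y, G (omegaPerm (M + 1)) x y = _ := fun x y => (hG.1 x y).trans (stair_eq β i x y)
    rw [hG.2 _ _ _ _ hl hxne, h0, h0, h0, stairP_x, stairP_y]
    rw [div_eq_div_iff (sub_ne_zero.mpr hxne) (sub_ne_zero.mpr hy)]
    simp only [Equiv.swap_apply_left]
    ring
  | hs w j hj ih =>
    intro i hl x y hx hy
    have hxne : x j.castSucc ≠ x j.succ := fun h =>
      (Fin.castSucc_lt_succ (i := j)).ne (hx h)
    have hlw := permLength_asc w j hj
    have h1 := permLength_or (Equiv.swap i.castSucc i.succ * w) j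
    have h2 := permLength_or_left (w * Equiv.swap j.castSucc j.succ) i
    rw [← mul_assoc] at h2
    have hx' : Function.Injective (fun k => x (Equiv.swap j.castSucc j.succ k)) :=
      hx.comp (Equiv.injective _)
    have ih' := ih i (by rw [← mul_assoc]; omega)
    have e1 := hG.2 (Equiv.swap i.castSucc i.succ * w * Equiv.swap j.castSucc j.succ) j x y
      (by rw [mul_assoc _ (Equiv.swap j.castSucc j.succ), Equiv.swap_mul_self, mul_one]; omega) hxne
    have e2 : ∀ y, _ := fun y => hG.2 (w * Equiv.swap j.castSucc j.succ) j x y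
      (by rw [mul_assoc _ (Equiv.swap j.castSucc j.succ), Equiv.swap_mul_self, mul_one]; omega) hxne
    rw [mul_assoc _ (Equiv.swap j.castSucc j.succ), Equiv.swap_mul_self, mul_one] at e1
    simp only [mul_assoc w (Equiv.swap j.castSucc j.succ), Equiv.swap_mul_self, mul_one] at e2
    rw [e1, e2, e2, mul_assoc (Equiv.swap i.castSucc i.succ), ih' _ _ hx hy, ih' _ _ hx' hy]
    have a1 := sub_ne_zero.mpr hxne
    have a2 := sub_ne_zero.mpr hy
    field_simp
    ring

lemma G_last [Field F] {M : ℕ} {β : F}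
    {G : Equiv.Perm (Fin (M + 1)) → (Fin (M + 1) → F) → (Fin (M + 1) → F) → F}
    (hG : IsGroth M β G) (y y' : Fin (M + 1) → F) (hy : ∀ i : Fin M, y i.castSucc = y' i.castSucc)
    (w : Equiv.Perm (Fin (M + 1))) :
    ∀ x : Fin (M + 1) → F, Function.Injective x → G w x y = G w x y' := by
  induction w using down_induction with
  | h0 =>
    intro x _
    rw [hG.1, hG.1]
    apply Finset.prod_congr rfl
    rintro ⟨a, b⟩ hp
    simp only [Finset.mem_filter, Finset.mem_univ, true_and] at hp
    have := hy ⟨b, by omega⟩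
    have hb : (Fin.castSucc ⟨b, by omega⟩ : Fin (M + 1)) = b := rfl
    rw [hb] at this
    simp only [this]
  | hs w j hj ih =>
    intro x hx
    have hxne : x j.castSucc ≠ x j.succ := fun h =>
      (Fin.castSucc_lt_succ (i := j)).ne (hx h)
    have hlw := permLength_asc w j hj
    have e2 : ∀ y, _ := fun y => hG.2 (w * Equiv.swap j.castSucc j.succ) j x y
      (by rw [mul_assoc _ (Equiv.swap j.castSucc j.succ), Equiv.swap_mul_self, mul_one]; omega) hxne
    simp only [mul_assoc w (Equiv.swap j.castSucc j.succ), Equiv.swap_mul_self, mul_one] at e2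
    have hx' : Function.Injective (fun k => x (Equiv.swap j.castSucc j.succ k)) :=
      hx.comp (Equiv.injective _)
    simp only [e2, ih x hx, ih _ hx']

/-! ### Main coefficient identity -/

lemma add_negOm [Field F] (β x t : F) (ht : 1 + β * t ≠ 0) :
    x + negOm β t + β * x * negOm β t = om β x t := by
  have e : negOm β t * (1 + β * t) = -t := div_mul_cancel₀ _ ht
  rw [om, eq_div_iff ht]
  linear_combination (1 + β * x) * e

lemma negOm_om [Field F] (β t t' : F) (ht : 1 + β * t ≠ 0) (ht' : 1 + β * t' ≠ 0) :
    (1 + β * negOm β t) * om β t t' = negOm β t' - negOm β t := by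
  have h : (1 + β * negOm β t) * (1 + β * t) = 1 := by
    have e : negOm β t * (1 + β * t) = -t := div_mul_cancel₀ _ ht
    linear_combination β * e
  have e : negOm β t * (1 + β * t) = -t := div_mul_cancel₀ _ ht
  have e' : negOm β t' * (1 + β * t') = -t' := div_mul_cancel₀ _ ht'
  have eo : om β t t' * (1 + β * t') = t - t' := div_mul_cancel₀ _ ht'
  apply mul_right_cancel₀ ht
  apply mul_right_cancel₀ ht'
  linear_combination (om β t t' * (1 + β * t')) * h + eo - (1 + β * t) * e' + (1 + β * t') * e

lemma negOm_inj [Field F] (β t t' : F) (ht : 1 + β * t ≠ 0) (ht' : 1 + β * t' ≠ 0)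
    (h : negOm β t = negOm β t') : t = t' := by
  rw [negOm, negOm, div_eq_div_iff ht ht'] at h
  linear_combination -h

lemma main_coef [Field F] {M : ℕ} {β : F}
    {G : Equiv.Perm (Fin (M + 2)) → (Fin (M + 2) → F) → (Fin (M + 2) → F) → F}
    (hG : IsGroth (M + 1) β G) (x : Fin (M + 2) → F) (hx : Function.Injective x)
    (w : Equiv.Perm (Fin (M + 2))) :
    ∀ t : Fin (M + 2) → F, Function.Injective t → (∀ k, 1 + β * t k ≠ 0) →
    G w x (fun j => negOm β (t j)) =
      Qv β t 0 (M + 1) (fun a => x a.castSucc) (fun a => (Fin.rev a).succ)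
        (fun j => omegaPerm (M + 2) (w⁻¹ j)) := by
  induction w using down_induction_left with
  | h0 =>
    intro t _ hb
    have hid : (fun j => omegaPerm (M + 2) ((omegaPerm (M + 2))⁻¹ j)) = idv (M + 2) (M + 1) := by
      funext j
      rw [← Equiv.Perm.mul_apply, mul_inv_cancel]
      have : (j : ℕ) ≤ M + 1 := by omega
      simp [idv, this]
    rw [hid, Qv_idv _ _ _ le_rfl _ _ (by intro a; simp [Fin.val_rev]; omega), hG.1,
      Finset.prod_filter, Fintype.prod_prod_type, Fin.prod_univ_castSucc]
    rw [Finset.prod_eq_one (s := Finset.univ) (f := fun y : Fin (M + 2) => _), mul_one]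
    · apply Finset.prod_congr rfl
      intro a _
      apply Finset.prod_congr rfl
      intro j _
      have : ((a.castSucc : Fin (M + 2)) : ℕ) + (j : ℕ) + 2 ≤ M + 1 + 1 ↔ (j : ℕ) + a < M + 1 := by
        simp; omega
      simp only [this, add_negOm β _ _ (hb j)]
    · intro j _
      rw [if_neg]
      simp
      try omega
  | hs w i hi ih =>
    intro t ht hb
    have hne : i.castSucc ≠ i.succ := (Fin.castSucc_lt_succ (i := i)).ne
    set s := Equiv.swap i.castSucc i.succ with hs
    have hlen := permLength_asc w⁻¹ i hi
    have hinv : w⁻¹ * s = (s * w)⁻¹ := by rw [mul_inv_rev, hs, Equiv.swap_inv]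
    rw [← hs, hinv, permLength_inv, permLength_inv] at hlen
    have hsw : s * (s * w) = w := by rw [← mul_assoc, hs, Equiv.swap_mul_self, one_mul]
    have hL := G_left hG (s * w) i (by rw [← hs, hsw]; omega) x (fun j => negOm β (t j)) hx
      (fun h => hne (ht (negOm_inj β _ _ (hb _) (hb _) h)))
    rw [← hs, hsw] at hL
    have hA := congrFun (Av_Qv β t (fun j => t (s j)) i.castSucc i.succ (by simp) (hb _) (hb _)
      (fun k h1 h2 => by rw [hs, Equiv.swap_apply_of_ne_of_ne h1 h2]) (by simp [hs]) (by simp [hs])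
      (0 : Fin (M + 2)) (M + 1) (fun a => x a.castSucc) (fun a => (Fin.rev a).succ))
      (fun j => omegaPerm (M + 2) ((s * w)⁻¹ j))
    have hlt : omegaPerm (M + 2) ((s * w)⁻¹ i.castSucc) < omegaPerm (M + 2) ((s * w)⁻¹ i.succ) := by
      rw [← hinv]
      simp only [Equiv.Perm.mul_apply, hs, Equiv.swap_apply_left, Equiv.swap_apply_right]
      exact Fin.rev_lt_rev.mpr hi
    have hg : (fun k => omegaPerm (M + 2) ((s * w)⁻¹ (s k))) =
        fun j => omegaPerm (M + 2) (w⁻¹ j) := by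
      funext k
      rw [← hinv]
      simp [hs]
    simp only [Av, hlt, if_true, ← hs, hg] at hA
    rw [hL, ih t ht hb, ih (fun j => t (s j)) (ht.comp s.injective) (fun k => hb _), ← hA]
    have hy : negOm β (t i.castSucc) - negOm β (t i.succ) ≠ 0 := by
      rw [sub_ne_zero]
      exact fun h => hne (ht (negOm_inj β _ _ (hb _) (hb _) h))
    rw [div_eq_iff hy]
    have key := negOm_om β (t i.castSucc) (t i.succ) (hb _) (hb _)
    generalize Qv β t 0 (M + 1) (fun a => x a.castSucc) (fun a => (Fin.rev a).succ)
      (fun j => omegaPerm (M + 2) ((s * w)⁻¹ j)) = A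
    generalize Qv β t 0 (M + 1) (fun a => x a.castSucc) (fun a => (Fin.rev a).succ)
      (fun j => omegaPerm (M + 2) (w⁻¹ j)) = B
    linear_combination (- β * A - B) * key

/-- **Theorem `thm1`**: for `n = N = M+2`,
`B_{N-1}(σ_1) B_{N-2}(σ_2) ⋯ B_1(σ_{N-1}) |Ω⟩
  = ∑_{w ∈ S_N} G^β_w(σ_1,…,σ_{N-1}; ⊖t_1,…,⊖t_{N-1}) |ω_N w⁻¹⟩`. -/
theorem groth_expansion [Field F] [CharZero F] (M : ℕ) (β : F)
    (σ : Fin (M + 1) → F) (t : Fin (M + 2) → F)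
    (hind : AlgebraicIndependent ℚ
      (Sum.elim (fun _ : Unit => β) (Sum.elim σ t)))
    (G : Equiv.Perm (Fin (M + 2)) → (Fin (M + 2) → F) → (Fin (M + 2) → F) → F)
    (hG : IsGroth (M + 1) β G) :
    Matrix.mulVec (descB M β t σ) (ket (M + 2) (M + 2) fun _ => 0) =
      ∑ w : Equiv.Perm (Fin (M + 2)),
        G w (Fin.snoc σ 0) (Fin.snoc (fun i : Fin (M + 1) => negOm β (t i.castSucc)) 0) •
          ket (M + 2) (M + 2) fun j => omegaPerm (M + 2) (w⁻¹ j) := by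
  have hinj := hind.injective
  have hb : ∀ k, 1 + β * t k ≠ 0 := by
    intro k h
    have h2 : (MvPolynomial.aeval (Sum.elim (fun _ : Unit => β) (Sum.elim σ t)))
        ((1 : MvPolynomial (Unit ⊕ (Fin (M + 1) ⊕ Fin (M + 2))) ℚ) +
          MvPolynomial.X (Sum.inl ()) * MvPolynomial.X (Sum.inr (Sum.inr k))) =
        (MvPolynomial.aeval (Sum.elim (fun _ : Unit => β) (Sum.elim σ t)))
          (0 : MvPolynomial (Unit ⊕ (Fin (M + 1) ⊕ Fin (M + 2))) ℚ) := by
      simpa using h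
    have h3 := congrArg (MvPolynomial.eval 0) (hind h2)
    simp at h3
  have ht : Function.Injective t := fun a b hab => by
    have := @hinj (Sum.inr (Sum.inr a)) (Sum.inr (Sum.inr b)) (by simpa using hab)
    simpa using this
  have hσ : Function.Injective σ := fun a b hab => by
    have := @hinj (Sum.inr (Sum.inl a)) (Sum.inr (Sum.inl b)) (by simpa using hab)
    simpa using this
  have hσ0 : ∀ a, σ a ≠ 0 := fun a => hind.ne_zero (Sum.inr (Sum.inl a))
  have hx : Function.Injective (Fin.snoc σ 0 : Fin (M + 2) → F) := by
    intro a b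
    refine Fin.lastCases ?_ (fun a => ?_) a <;> refine Fin.lastCases ?_ (fun b => ?_) b
    · simp
    · simpa using fun h => absurd h.symm (hσ0 b)
    · simpa using fun h => absurd h (hσ0 a)
    · simpa using fun h => hσ h
  rw [descB, Qv_eq]
  have hcoef : ∀ w, G w (Fin.snoc σ 0)
      (Fin.snoc (fun i : Fin (M + 1) => negOm β (t i.castSucc)) 0) =
      Qv β t 0 (M + 1) σ (fun a => (Fin.rev a).succ)
        (fun j => omegaPerm (M + 2) (w⁻¹ j)) := by
    intro w
    rw [G_last hG _ (fun j => negOm β (t j)) (by intro i; simp) w _ hx,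
      main_coef hG _ hx w t ht hb]
    simp
  simp only [hcoef]
  funext g
  simp only [Finset.sum_apply, Pi.smul_apply, smul_eq_mul, ket]
  by_cases hg : Function.Injective g
  · obtain ⟨v, rfl⟩ : ∃ v : Equiv.Perm (Fin (M + 2)), g = v :=
      ⟨Equiv.ofBijective g (Finite.injective_iff_bijective.mp hg), rfl⟩
    have hv : (fun j => omegaPerm (M + 2) (((v⁻¹ * omegaPerm (M + 2))⁻¹ : Equiv.Perm _) j)) = v := by
      funext j
      rw [mul_inv_rev, inv_inv, Equiv.Perm.mul_apply, ← Equiv.Perm.mul_apply, mul_inv_cancel]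
      rfl
    rw [Finset.sum_eq_single (v⁻¹ * omegaPerm (M + 2))]
    · rw [hv]; simp
    · intro w _ hw
      rw [if_neg, mul_zero]
      intro h
      apply hw
      have : v = omegaPerm (M + 2) * w⁻¹ := by
        ext j : 1
        exact congrFun h j
      rw [this]; simp
    · simp
  · have h0 : Qv β t 0 (M + 1) σ (fun a => (Fin.rev a).succ) g = 0 := by
      by_contra h
      exact hg (Qv_injective M β t σ g h)
    rw [h0]
    symm
    apply Finset.sum_eq_zero
    intro w _
    rw [if_neg, mul_zero]
    rintro rfl
    exact hg ((omegaPerm (M + 2)).injective.comp (w⁻¹ : Equiv.Perm _).injective)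
end
end

section
/- For any w ∈ S_{N−1}, the operator-valued identity B_{w(1)}(σ_1) B_{w(2)}(σ_2) ⋯ B_{w(N−1)}(σ_{N−1}) = ∂̄^β_{w^{−1} ω_{N−1}} ( B_{N−1}(σ_1) B_{N−2}(σ_2) ⋯ B_1(σ_{N−1}) ) holds, where ω_{N−1} ∈ S_{N−1} is the longest permutation, ∂̄^β_i := ∂^β_i + β acts in the variables σ_i, σ_{i+1}, ∂̄^β_v := ∂̄^β_{i_1} ⋯ ∂̄^β_{i_ℓ} for any reduced word v = s_{i_1} ⋯ s_{i_ℓ}, and the operators ∂̄^β are applied entrywise to the End(H)-valued rational function of (σ_1,…,σ_{N−1}). -/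
noncomputable section
open scoped BigOperators

variable {F : Type*}

/-- The operator `∂̄^β_i = ∂^β_i + β`, acting on functions of `M+1` variables
in the pair of variables with indices `i, i+1`. -/
def ddbar [Field F] {M : ℕ} (β : F) (i : Fin M) (f : (Fin (M + 1) → F) → F) :
    (Fin (M + 1) → F) → F := fun z =>
  ((1 + β * z i.succ) * f z -
      (1 + β * z i.castSucc) * f (fun j => z (Equiv.swap i.castSucc i.succ j))) /
    (z i.castSucc - z i.succ) + β * f z

/-- `∂̄^β_{i_1} ∂̄^β_{i_2} ⋯ ∂̄^β_{i_ℓ}` for a word `L = [i_1, …, i_ℓ]`. -/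
def ddbarWord [Field F] {M : ℕ} (β : F) (L : List (Fin M)) (f : (Fin (M + 1) → F) → F) :
    (Fin (M + 1) → F) → F :=
  L.foldr (ddbar β) f

/-- `L = [i_1, …, i_ℓ]` is a reduced word for `v`, i.e. `v = s_{i_1} ⋯ s_{i_ℓ}`
with `ℓ = ℓ(v)`. -/
def IsReducedWord {M : ℕ} (L : List (Fin M)) (v : Equiv.Perm (Fin (M + 1))) : Prop :=
  (L.map fun i => Equiv.swap (Fin.castSucc i) (Fin.succ i)).prod = v ∧ L.length = permLength v

/-! ### Combinatorics of lengths -/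

lemma swap_lt_of_lt {M : ℕ} (i : Fin M) (a b : Fin (M + 1)) (h : a < b)
    (hne : ¬ (a = i.castSucc ∧ b = i.succ)) :
    Equiv.swap i.castSucc i.succ a < Equiv.swap i.castSucc i.succ b := by
  have h1 : (i.castSucc : Fin (M+1)).val = i.val := rfl
  have h2 : (i.succ : Fin (M+1)).val = i.val + 1 := by simp
  simp only [Fin.lt_def, Fin.ext_iff, Equiv.swap_apply_def] at *
  split_ifs <;> omega

lemma permLength_swap_mul_le {M : ℕ} (i : Fin M) (v : Equiv.Perm (Fin (M + 1))) :
    permLength (Equiv.swap i.castSucc i.succ * v) ≤ permLength v + 1 := by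
  unfold permLength
  refine le_trans (Finset.card_le_card (t := insert (v⁻¹ i.castSucc, v⁻¹ i.succ) _) ?_)
    (Finset.card_insert_le _ _)
  rintro ⟨p, q⟩ h
  rw [Finset.mem_filter] at h
  rw [Finset.mem_insert, Finset.mem_filter]
  simp only [Finset.mem_univ, true_and, Equiv.Perm.mul_apply, Prod.mk.injEq] at h ⊢
  by_contra hc
  push Not at hc
  have h3 := hc.2 h.1
  have hne : v p ≠ v q := fun e => h.1.ne (v.injective e)
  have h4 := swap_lt_of_lt i (v p) (v q) (lt_of_le_of_ne h3 hne) (by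
    rintro ⟨e1, e2⟩
    exact hc.1 (by rw [← e1]; simp) (by rw [← e2]; simp))
  exact absurd h.2 (not_lt.mpr h4.le)

lemma permLength_le_swap_mul {M : ℕ} (i : Fin M) (v : Equiv.Perm (Fin (M + 1)))
    (hv : v⁻¹ i.castSucc < v⁻¹ i.succ) :
    permLength v ≤ permLength (Equiv.swap i.castSucc i.succ * v) := by
  unfold permLength
  refine Finset.card_le_card ?_
  rintro ⟨p, q⟩ h
  rw [Finset.mem_filter] at h ⊢
  simp only [Finset.mem_univ, true_and, Equiv.Perm.mul_apply] at h ⊢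
  refine ⟨h.1, swap_lt_of_lt i _ _ h.2 ?_⟩
  rintro ⟨e1, e2⟩
  rw [← e1, ← e2] at hv
  simp at hv
  exact absurd hv (not_lt.mpr h.1.le)

lemma permLength_word_le {M : ℕ} (L : List (Fin M)) :
    permLength ((L.map fun i => Equiv.swap (Fin.castSucc i) (Fin.succ i)).prod) ≤ L.length := by
  induction L with
  | nil =>
    simp only [List.map_nil, List.prod_nil, List.length_nil, permLength, Nat.le_zero,
      Finset.card_eq_zero]
    ext ⟨p, q⟩
    rw [Finset.mem_filter]
    simpa using fun h : p < q => h.le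
  | cons i L ih =>
    simp only [List.map_cons, List.prod_cons, List.length_cons]
    exact (permLength_swap_mul_le i _).trans (by omega)

lemma reducedWord_cons {M : ℕ} (i : Fin M) (L : List (Fin M))
    (w : Equiv.Perm (Fin (M + 1)))
    (h : IsReducedWord (i :: L) (w⁻¹ * omegaPerm (M + 1))) :
    IsReducedWord L ((w * Equiv.swap i.castSucc i.succ)⁻¹ * omegaPerm (M + 1)) ∧
      w i.castSucc < w i.succ := by
  obtain ⟨h1, h2⟩ := h
  simp only [List.map_cons, List.prod_cons, List.length_cons] at h1 h2
  have hle := permLength_word_le L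
  set u := (L.map fun i => Equiv.swap (Fin.castSucc i) (Fin.succ i)).prod with hu
  have h3 := permLength_swap_mul_le i u
  rw [h1] at h3
  have hu2 : u = Equiv.swap i.castSucc i.succ * (w⁻¹ * omegaPerm (M + 1)) := by
    rw [← h1, ← mul_assoc, Equiv.swap_mul_self, one_mul]
  refine ⟨⟨?_, ?_⟩, ?_⟩
  · rw [← hu, hu2, mul_inv_rev, Equiv.swap_inv, mul_assoc]
  · rw [mul_inv_rev, Equiv.swap_inv, mul_assoc, ← hu2]; omega
  · by_contra hc
    have hne : w i.castSucc ≠ w i.succ := fun e => by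
      have := w.injective e
      simp [Fin.ext_iff] at this
    have hlt : w i.succ < w i.castSucc := lt_of_le_of_ne (not_lt.mp hc) hne.symm
    have := permLength_le_swap_mul i (w⁻¹ * omegaPerm (M + 1)) (by
      have e : ∀ a, (w⁻¹ * omegaPerm (M + 1))⁻¹ a = Fin.rev (w a) := by
        intro a; rw [mul_inv_rev]; simp only [inv_inv, Equiv.Perm.mul_apply]; rfl
      rw [e, e]; exact Fin.rev_lt_rev.mpr hlt)
    rw [← hu2] at this
    omega

/-! ### Products of lists -/

lemma ofFn_prod_split {A : Type*} [Monoid A] {M : ℕ} (i : Fin M) (f : Fin (M + 1) → A) :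
    ∃ P Q : A, ∀ g : Fin (M + 1) → A, (∀ j, j ≠ i.castSucc → j ≠ i.succ → g j = f j) →
      (List.ofFn g).prod = P * (g i.castSucc * g i.succ) * Q := by
  induction M with
  | zero => exact i.elim0
  | succ M ih =>
    induction i using Fin.cases with
    | zero =>
      refine ⟨1, (List.ofFn fun j : Fin M => f j.succ.succ).prod, fun g hg => ?_⟩
      rw [List.ofFn_succ, List.ofFn_succ]
      simp only [List.prod_cons, one_mul, mul_assoc]
      have : (fun j : Fin M => g j.succ.succ) = fun j : Fin M => f j.succ.succ := by
        funext j
        exact hg _ (by simp [Fin.ext_iff]) (by simp [Fin.ext_iff])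
      rw [this]; rfl
    | succ i =>
      obtain ⟨P, Q, h⟩ := ih i (fun j => f j.succ)
      refine ⟨f 0 * P, Q, fun g hg => ?_⟩
      rw [List.ofFn_succ, List.prod_cons, h (fun j => g j.succ) (fun j h1 h2 => hg _ (by
        rw [← Fin.succ_castSucc]; exact fun e => h1 (Fin.succ_injective _ e)) (by
        exact fun e => h2 (Fin.succ_injective _ e))), hg 0 (by simp [Fin.ext_iff]) (by simp [Fin.ext_iff])]
      simp only [mul_assoc, Fin.succ_castSucc]

/-! ### Site operators -/

/-- Embedding of operators on the `i`-th site. -/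
def siteEmb [Field F] {n N : ℕ} (i : Fin N) (E : Matrix (Fin n) (Fin n) F) :
    Matrix (Fin N → Fin n) (Fin N → Fin n) F := Matrix.of fun s s' =>
  E (s i) (s' i) * (if ∀ j, j ≠ i → s j = s' j then 1 else 0)

lemma siteEmb_add [Field F] {n N : ℕ} (i : Fin N) (E E' : Matrix (Fin n) (Fin n) F) :
    siteEmb i (E + E') = siteEmb i E + siteEmb i E' := by
  ext s s'; simp only [siteEmb, add_mul, Matrix.of_apply, Matrix.add_apply]

lemma siteEmb_smul [Field F] {n N : ℕ} (i : Fin N) (c : F) (E : Matrix (Fin n) (Fin n) F) :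
    siteEmb i (c • E) = c • siteEmb i E := by
  ext s s'; simp [siteEmb]

lemma siteEmb_mul [Field F] {n N : ℕ} (i : Fin N) (E E' : Matrix (Fin n) (Fin n) F) :
    siteEmb i (E * E') = siteEmb i E * siteEmb i E' := by
  ext s s'
  simp only [siteEmb, Matrix.of_apply, Matrix.mul_apply]
  rw [Finset.sum_mul]
  refine Fintype.sum_of_injective (fun k => Function.update s i k)
    (Function.update_injective s i) _ _ ?_ ?_
  · intro m hm
    have : ¬ ∀ j, j ≠ i → s j = m j := by
      intro h
      apply hm
      refine ⟨m i, ?_⟩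
      funext j
      by_cases hj : j = i
      · subst hj; simp
      · simp [hj, h j hj]
    rw [if_neg this]; ring
  · intro k
    have h1 : ∀ j, j ≠ i → s j = Function.update s i k j := by
      intro j hj; simp [hj]
    have h2 : (∀ j, j ≠ i → Function.update s i k j = s' j) ↔ (∀ j, j ≠ i → s j = s' j) := by
      refine forall_congr' fun j => imp_congr_right fun hj => ?_
      simp [hj]
    rw [if_pos h1]
    simp only [h2, Function.update_self]
    ring

lemma siteEmb_mul_apply [Field F] {n N : ℕ} {i j : Fin N} (hij : i ≠ j)
    (E E' : Matrix (Fin n) (Fin n) F) (s s' : Fin N → Fin n) :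
    (siteEmb i E * siteEmb j E') s s' = E (s i) (s' i) * E' (s j) (s' j) *
      (if ∀ k, k ≠ i → k ≠ j → s k = s' k then 1 else 0) := by
  rw [Matrix.mul_apply, Fintype.sum_eq_single (Function.update s i (s' i))]
  · have h1 : ∀ k, k ≠ i → s k = Function.update s i (s' i) k := by
      intro k hk; simp [hk]
    have h2 : (∀ k, k ≠ j → Function.update s i (s' i) k = s' k) ↔
        (∀ k, k ≠ i → k ≠ j → s k = s' k) := by
      refine forall_congr' fun k => ?_
      by_cases hk : k = i
      · subst hk; simp
      · simp [hk]
    simp only [siteEmb, Matrix.of_apply]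
    rw [if_pos h1]
    simp only [h2, Function.update_self, Function.update_of_ne hij.symm]
    ring
  · intro m hm
    simp only [siteEmb, Matrix.of_apply]
    by_cases h1 : ∀ k, k ≠ i → s k = m k
    · have h2 : ¬ ∀ k, k ≠ j → m k = s' k := by
        intro h2
        apply hm
        funext k
        by_cases hk : k = i
        · subst hk; simp [h2 k hij]
        · simp [hk, h1 k hk]
      rw [if_neg h2]; ring
    · rw [if_neg h1]; ring

lemma siteEmb_commute [Field F] {n N : ℕ} {i j : Fin N} (hij : i ≠ j)
    (E E' : Matrix (Fin n) (Fin n) F) :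
    siteEmb i E * siteEmb j E' = siteEmb j E' * siteEmb i E := by
  ext s s'
  rw [siteEmb_mul_apply hij, siteEmb_mul_apply hij.symm]
  have : (∀ k, k ≠ i → k ≠ j → s k = s' k) ↔ (∀ k, k ≠ j → k ≠ i → s k = s' k) :=
    forall_congr' fun k => ⟨fun h a b => h b a, fun h a b => h b a⟩
  simp only [this]
  ring

/-! ### The exchange (RTT) relation -/

/-- coefficient of the permuted term -/
def ca {n : ℕ} [Field F] (β C : F) (k l : Fin n) : F := if k < l then 1 + β * C else 1

/-- coefficient of the diagonal term -/
def cb {n : ℕ} [Field F] (C : F) (k l : Fin n) : F := if l < k then C else 0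

/-- R-matrix with spectral difference `C`, as operators on the second space. -/
def Lop {n : ℕ} [Field F] (β C : F) (k c : Fin n) : Matrix (Fin n) (Fin n) F :=
  Matrix.of fun p m => (if k = m ∧ p = c then ca β C c m else 0) +
    (if k = c ∧ p = m then cb C c m else 0)

lemma Lop_mul {n : ℕ} [Field F] (β A B : F) (k c l d p q : Fin n) :
    (Lop β A k c * Lop β B l d) p q =
      (if p = c ∧ k = d ∧ l = q then ca β A c d * ca β B d q else 0) +
      (if p = c ∧ l = d ∧ k = q then ca β A c q * cb B d q else 0) +
      (if k = c ∧ p = d ∧ l = q then cb A c d * ca β B d q else 0) +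
      (if k = c ∧ l = d ∧ p = q then cb A c q * cb B d q else 0) := by
  simp only [Matrix.mul_apply, Lop, Matrix.of_apply, add_mul, mul_add, Finset.sum_add_distrib]
  have e1 : ∀ x : Fin n, ((if k = x ∧ p = c then ca β A c x else 0) * (if l = q ∧ x = d then ca β B d q else 0)) = if x = d then (if p = c ∧ k = d ∧ l = q then ca β A c d * ca β B d q else 0) else 0 := by
    intro x; split_ifs <;> grind
  have e2 : ∀ x : Fin n, ((if k = x ∧ p = c then ca β A c x else 0) * (if l = d ∧ x = q then cb B d q else 0)) = if x = q then (if p = c ∧ l = d ∧ k = q then ca β A c q * cb B d q else 0) else 0 := by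
    intro x; split_ifs <;> grind
  have e3 : ∀ x : Fin n, ((if k = c ∧ p = x then cb A c x else 0) * (if l = q ∧ x = d then ca β B d q else 0)) = if x = d then (if k = c ∧ p = d ∧ l = q then cb A c d * ca β B d q else 0) else 0 := by
    intro x; split_ifs <;> grind
  have e4 : ∀ x : Fin n, ((if k = c ∧ p = x then cb A c x else 0) * (if l = d ∧ x = q then cb B d q else 0)) = if x = q then (if k = c ∧ l = d ∧ p = q then cb A c q * cb B d q else 0) else 0 := by
    intro x; split_ifs <;> grind
  simp only [e1, e2, e3, e4, Finset.sum_ite_eq', Finset.mem_univ, if_true]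
  ring

set_option maxHeartbeats 2000000 in
set_option linter.unusedSimpArgs false in
lemma ybe {n : ℕ} [Field F] (β A B C : F) (h : A = B + C + β * B * C) (i j c d : Fin n) :
    ca β C j i • (Lop β A j c * Lop β B i d) + cb C i j • (Lop β A i c * Lop β B j d) =
    ca β C c d • (Lop β B j c * Lop β A i d) + cb C c d • (Lop β B j d * Lop β A i c) := by
  ext p q
  simp only [Matrix.add_apply, Matrix.smul_apply, smul_eq_mul, Lop_mul]
  subst h
  unfold ca cb
  rcases lt_trichotomy c d with h1 | h1 | h1 <;> rcases lt_trichotomy d q with h2 | h2 | h2 <;>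
    rcases lt_trichotomy c q with h3 | h3 | h3 <;> try (exfalso; omega)
  all_goals
    try have n1 := h1.not_gt
    try have n2 := h2.not_gt
    try have n3 := h3.not_gt
    try have m1 := h1.ne
    try have m2 := h2.ne
    try have m3 := h3.ne
    try have m1' := h1.ne'
    try have m2' := h2.ne'
    try have m3' := h3.ne'
    by_cases hi1 : i = c <;> by_cases hi2 : i = d <;> by_cases hi3 : i = q <;> try (exfalso; omega)
    all_goals
      by_cases hj1 : j = c <;> by_cases hj2 : j = d <;> by_cases hj3 : j = q <;>
        try (exfalso; omega)
      all_goals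
        by_cases hp1 : p = c <;> by_cases hp2 : p = d <;> by_cases hp3 : p = q <;>
          try (exfalso; omega)
        all_goals
          simp only [*, and_true, true_and, and_false, false_and, if_true, if_false, lt_irrefl,
            mul_zero, zero_mul, add_zero, zero_add, mul_one, one_mul]
          try ring

/-- The exchange relation. -/
def RTT {n : ℕ} {A : Type*} [Field F] [Ring A] [Algebra F A] (β C : F)
    (X Y : Matrix (Fin n) (Fin n) A) : Prop :=
  ∀ i j c d : Fin n,
    ca β C j i • (X j c * Y i d) + cb C i j • (X i c * Y j d) =
      ca β C c d • (Y j c * X i d) + cb C c d • (Y j d * X i c)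

lemma RTT_one {n : ℕ} {A : Type*} [Field F] [Ring A] [Algebra F A] (β C : F) :
    RTT β C (1 : Matrix (Fin n) (Fin n) A) 1 := by
  intro i j c d
  simp only [Matrix.one_apply]
  by_cases h1 : j = c <;> by_cases h2 : i = d <;> by_cases h3 : i = c <;> by_cases h4 : j = d <;>
    simp_all

lemma RTT_mul {n : ℕ} {A : Type*} [Field F] [Ring A] [Algebra F A] (β C : F)
    (X Y X' Y' : Matrix (Fin n) (Fin n) A) (h : RTT β C X Y) (h' : RTT β C X' Y')
    (hc1 : ∀ i j k l, X' i j * Y k l = Y k l * X' i j)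
    (hc2 : ∀ i j k l, Y' i j * X k l = X k l * Y' i j) :
    RTT β C (X * X') (Y * Y') := by
  intro i j c d
  have e1 : ∀ j c i d, (X * X') j c * (Y * Y') i d =
      ∑ k, ∑ l, (X j k * Y i l) * (X' k c * Y' l d) := by
    intro j c i d
    simp only [Matrix.mul_apply, Finset.sum_mul_sum]
    refine Finset.sum_congr rfl fun k _ => Finset.sum_congr rfl fun l _ => ?_
    rw [mul_assoc, ← mul_assoc (X' k c), hc1, mul_assoc, mul_assoc]
  have e2 : ∀ j c i d, (Y * Y') j c * (X * X') i d =
      ∑ k, ∑ l, (Y j k * X i l) * (Y' k c * X' l d) := by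
    intro j c i d
    simp only [Matrix.mul_apply, Finset.sum_mul_sum]
    refine Finset.sum_congr rfl fun k _ => Finset.sum_congr rfl fun l _ => ?_
    rw [mul_assoc, ← mul_assoc (Y' k c), hc2, mul_assoc, mul_assoc]
  rw [e1, e1, e2, e2]
  simp only [Finset.smul_sum, ← Finset.sum_add_distrib]
  have l1 : ∀ k l, ca β C j i • (X j k * Y i l * (X' k c * Y' l d)) +
      cb C i j • (X i k * Y j l * (X' k c * Y' l d)) =
      ca β C k l • (Y j k * X i l * (X' k c * Y' l d)) +
      cb C k l • (Y j l * X i k * (X' k c * Y' l d)) := by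
    intro k l
    have := congrArg (· * (X' k c * Y' l d)) (h i j k l)
    simpa only [add_mul, smul_mul_assoc] using this
  have l2 : ∀ k l, ca β C c d • (Y j k * X i l * (Y' k c * X' l d)) +
      cb C c d • (Y j k * X i l * (Y' k d * X' l c)) =
      ca β C k l • (Y j k * X i l * (X' k c * Y' l d)) +
      cb C l k • (Y j k * X i l * (X' l c * Y' k d)) := by
    intro k l
    have := congrArg ((Y j k * X i l) * ·) (h' l k c d)
    simpa only [mul_add, mul_smul_comm] using this.symm
  simp only [l1, l2]
  simp only [Finset.sum_add_distrib]
  congr 1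
  exact Finset.sum_comm

/-- site matrices -/
def siteMat [Field F] {n N : ℕ} (β : F) (t : Fin N → F) (u : F) (i : Fin N) :
    Matrix (Fin n) (Fin n) (Matrix (Fin N → Fin n) (Fin N → Fin n) F) :=
  Matrix.of fun k c => siteEmb i (Lop β (om β u (t i)) k c)

lemma om_rel_s15 [Field F] (β x y z : F) (hy : 1 + β * y ≠ 0) (hz : 1 + β * z ≠ 0) :
    om β x z = om β y z + om β x y + β * om β y z * om β x y := by
  have ha := inv_mul_cancel₀ hz
  have hb := inv_mul_cancel₀ hy
  simp only [om, div_eq_mul_inv]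
  generalize (1 + β * z)⁻¹ = a at ha ⊢
  generalize (1 + β * y)⁻¹ = b at hb ⊢
  linear_combination (x - y) * b * ha - (x - y) * a * hb

lemma RTT_site [Field F] {n N : ℕ} (β : F) (t : Fin N → F) (x y : F) (i : Fin N)
    (hy : 1 + β * y ≠ 0) (ht : 1 + β * t i ≠ 0) :
    RTT β (om β x y) (siteMat (n := n) β t x i) (siteMat β t y i) := by
  intro a b c d
  simp only [siteMat, Matrix.of_apply, ← siteEmb_mul, ← siteEmb_smul, ← siteEmb_add]
  rw [ybe β _ _ _ (om_rel_s15 β x y (t i) hy ht)]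

lemma siteMat_commute [Field F] {n N : ℕ} (β : F) (t : Fin N → F) (u v : F) (i : Fin N)
    (l : List (Fin N)) (hi : i ∉ l) (a b c d : Fin n) :
    (l.map (siteMat (n := n) β t u)).prod a b * siteMat β t v i c d =
      siteMat β t v i c d * (l.map (siteMat (n := n) β t u)).prod a b := by
  induction l generalizing a b with
  | nil =>
    simp only [List.map_nil, List.prod_nil, Matrix.one_apply]
    split_ifs <;> simp
  | cons j l ih =>
    rw [List.mem_cons, not_or] at hi
    simp only [List.map_cons, List.prod_cons, Matrix.mul_apply, Finset.sum_mul, Finset.mul_sum]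
    refine Finset.sum_congr rfl fun k _ => ?_
    rw [mul_assoc, ih hi.2, ← mul_assoc, ← mul_assoc]
    congr 1
    exact siteEmb_commute (Ne.symm hi.1) _ _

lemma RTT_list [Field F] {n N : ℕ} (β : F) (t : Fin N → F) (x y : F)
    (hy : 1 + β * y ≠ 0) (ht : ∀ i, 1 + β * t i ≠ 0) (l : List (Fin N)) (hl : l.Nodup) :
    RTT β (om β x y) (l.map (siteMat (n := n) β t x)).prod (l.map (siteMat β t y)).prod := by
  induction l with
  | nil => simpa using RTT_one β _
  | cons i l ih =>
    rw [List.nodup_cons] at hl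
    simp only [List.map_cons, List.prod_cons]
    exact RTT_mul β _ _ _ _ _ (RTT_site β t x y i hy (ht i)) (ih hl.2)
      (fun a b c d => siteMat_commute β t x y i l hl.1 a b c d)
      (fun a b c d => siteMat_commute β t y x i l hl.1 a b c d)

lemma Rsite_eq [Field F] {n N : ℕ} (β u : F) (t : Fin N → F) (i : Fin N) :
    Rsite n N β u (t i) i = Matrix.compRingEquiv (Fin n) (Fin N → Fin n) F (siteMat β t u i) := by
  ext ⟨k, s⟩ ⟨c, s'⟩
  show _ = siteMat β t u i k c s s'
  simp only [Rsite, siteMat, siteEmb, Matrix.of_apply, Rmat, Lop, ca, cb]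
  congr 2
  rw [← ite_and]
  simp only [and_assoc]

lemma blockOp_eq [Field F] {n N : ℕ} (β u : F) (t : Fin N → F) (r c : Fin n) :
    blockOp n N β u t r c =
      ((List.finRange N).reverse.map (siteMat (n := n) β t u)).prod r c := by
  have : Tmono n N β u t = Matrix.compRingEquiv (Fin n) (Fin N → Fin n) F
      ((List.finRange N).reverse.map (siteMat (n := n) β t u)).prod := by
    rw [map_list_prod]
    unfold Tmono
    congr 1
    rw [List.ofFn_eq_map, ← List.map_reverse, List.map_map]
    exact List.map_congr_left fun i _ => Rsite_eq β u t i
  ext s s'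
  simp only [blockOp, Matrix.of_apply, this]
  rfl

lemma B_exchange [Field F] {n N : ℕ} (β x y : F) (t : Fin N → F)
    (hx : 1 + β * x ≠ 0) (hxy : x ≠ y) (ht : ∀ i, 1 + β * t i ≠ 0) (z a b : Fin n) (hab : a < b) :
    blockOp n N β x t z a * blockOp n N β y t z b =
      ((1 + β * x) / (x - y)) • (blockOp n N β x t z b * blockOp n N β y t z a -
        blockOp n N β y t z b * blockOp n N β x t z a) := by
  have h := RTT_list (n := n) β t y x hx ht (List.finRange N).reverse
    (List.nodup_reverse.mpr (List.nodup_finRange N)) z z b a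
  simp only [← blockOp_eq, ca, cb, lt_irrefl, if_false, hab, hab.not_gt, if_true, one_smul,
    zero_smul, add_zero] at h
  rw [h]
  have hs : x - y ≠ 0 := sub_ne_zero.mpr hxy
  have e : om β y x = -((x - y) / (1 + β * x)) := by unfold om; rw [← neg_div, neg_sub]
  rw [e, sub_add_eq_sub_sub, sub_self, zero_sub, neg_smul, neg_neg, smul_smul]
  rw [div_mul_div_cancel₀ hs, div_self hx, one_smul]

lemma main_aux [Field F] (M : ℕ) (β : F) (t : Fin (M + 2) → F)
    (ht : ∀ i, 1 + β * t i ≠ 0) (s s' : Fin (M + 2) → Fin (M + 2)) (L : List (Fin M)) :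
    ∀ (w : Equiv.Perm (Fin (M + 1))) (_ : IsReducedWord L (w⁻¹ * omegaPerm (M + 1)))
      (σ : Fin (M + 1) → F) (_ : Function.Injective σ) (_ : ∀ a, 1 + β * σ a ≠ 0),
      ((List.ofFn fun a : Fin (M + 1) =>
          blockOp (M + 2) (M + 2) β (σ a) t 0 ((w a).succ)).prod) s s' =
        ddbarWord β L (fun σ' => descB M β t σ' s s') σ := by
  induction L with
  | nil =>
    intro w hw σ _ _
    have h1 := hw.1
    simp only [List.map_nil, List.prod_nil] at h1
    have : w = omegaPerm (M + 1) := (inv_mul_eq_one.mp h1.symm)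
    subst this
    rfl
  | cons i L ih =>
    intro w hw σ hinj hσ
    obtain ⟨hL, hlt⟩ := reducedWord_cons i L w hw
    have e0 : ddbarWord β (i :: L) (fun σ' => descB M β t σ' s s') σ =
      ddbar β i (ddbarWord β L (fun σ' => descB M β t σ' s s')) σ := rfl
    rw [e0, ddbar, ← ih _ hL σ hinj hσ, ← ih _ hL (fun j => σ (Equiv.swap i.castSucc i.succ j))
      (hinj.comp (Equiv.swap i.castSucc i.succ).injective) (fun a => hσ _)]
    obtain ⟨P, Q, hPQ⟩ := ofFn_prod_split i (fun a : Fin (M + 1) =>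
          blockOp (M + 2) (M + 2) β (σ a) t 0 ((w a).succ))
    rw [hPQ _ (fun j _ _ => rfl), hPQ _ (fun j h1 h2 => by
      simp only [Equiv.Perm.mul_apply, Equiv.swap_apply_of_ne_of_ne h1 h2]),
      hPQ _ (fun j h1 h2 => by
      simp only [Equiv.Perm.mul_apply, Equiv.swap_apply_of_ne_of_ne h1 h2])]
    simp only [Equiv.Perm.mul_apply, Equiv.swap_apply_left, Equiv.swap_apply_right]
    have hne : σ i.castSucc ≠ σ i.succ := fun e => by
      have := hinj e
      simp [Fin.ext_iff] at this
    have hs := sub_ne_zero.mpr hne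
    rw [B_exchange β _ _ t (hσ _) hne ht 0 _ _ (Fin.succ_lt_succ_iff.mpr hlt)]
    simp only [mul_smul_comm, smul_mul_assoc, mul_sub, sub_mul, Matrix.smul_apply,
      Matrix.sub_apply, smul_eq_mul]
    field_simp
    ring

lemma one_add_mul_ne_zero_of_algInd [Field F] [CharZero F] {ι : Type*} (v : ι → F)
    (h : AlgebraicIndependent ℚ v) {i j : ι} (_hij : i ≠ j) : 1 + v i * v j ≠ 0 := by
  intro h0
  have h1 := (algebraicIndependent_iff.mp h) (1 + MvPolynomial.X i * MvPolynomial.X j)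
    (by simpa using h0)
  have h2 := congrArg (MvPolynomial.eval (fun _ => (0 : ℚ))) h1
  simp at h2

/-- **Lemma `l5`**: for any `w ∈ S_{N-1}` (`n = N = M+2`),
`B_{w(1)}(σ_1) B_{w(2)}(σ_2) ⋯ B_{w(N-1)}(σ_{N-1})
  = ∂̄^β_{w⁻¹ ω_{N-1}} (B_{N-1}(σ_1) B_{N-2}(σ_2) ⋯ B_1(σ_{N-1}))`,
the operators `∂̄^β` (given by any reduced word of `w⁻¹ ω_{N-1}`) being applied
entrywise to the matrix-valued function of `(σ_1,…,σ_{N-1})`. -/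
theorem B_word_divided_difference [Field F] [CharZero F] (M : ℕ) (β : F)
    (t : Fin (M + 2) → F) (σ : Fin (M + 1) → F)
    (hind : AlgebraicIndependent ℚ
      (Sum.elim (fun _ : Unit => β) (Sum.elim σ t)))
    (w : Equiv.Perm (Fin (M + 1))) (L : List (Fin M))
    (hL : IsReducedWord L (w⁻¹ * omegaPerm (M + 1))) :
    ∀ s s' : Fin (M + 2) → Fin (M + 2),
      ((List.ofFn fun a : Fin (M + 1) =>
          blockOp (M + 2) (M + 2) β (σ a) t 0 ((w a).succ)).prod) s s' =
        ddbarWord β L (fun σ' => descB M β t σ' s s') σ := by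
  intro s s'
  have hβσ : ∀ a, 1 + β * σ a ≠ 0 := fun a =>
    one_add_mul_ne_zero_of_algInd _ hind (i := Sum.inl ()) (j := Sum.inr (Sum.inl a)) (by simp)
  have hβt : ∀ a, 1 + β * t a ≠ 0 := fun a =>
    one_add_mul_ne_zero_of_algInd _ hind (i := Sum.inl ()) (j := Sum.inr (Sum.inr a)) (by simp)
  have hinj : Function.Injective σ := fun a b hab => by
    have := hind.injective (a₁ := Sum.inr (Sum.inl a)) (a₂ := Sum.inr (Sum.inl b)) hab
    simpa using this
  exact main_aux M β t hβt s s' L w hL σ hinj hβσ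
end
end

section
/- (Cauchy-type identity) For any w ∈ S_n, the double β-Grothendieck polynomials satisfy G^β_w(x; ⊖t) = ∑_{v ∈ S_n} G^β_v(x; ⊖z) · ∂̄^β_v G^β_w(z; ⊖t), as an identity of rational functions in the variables x = (x_1,…,x_n), z = (z_1,…,z_n), t = (t_1,…,t_n) and β, where ∂̄^β_v acts on the z-variables. -/
noncomputable section
open scoped BigOperators

variable {F : Type*}

namespace Cauchy

open Equiv

/-- simple transposition -/
abbrev sg {M : ℕ} (i : Fin M) : Perm (Fin (M + 1)) := swap i.castSucc i.succ

theorem inv_app {N : ℕ} (w : Perm (Fin N)) (a : Fin N) : w⁻¹ (w a) = a := w.symm_apply_apply a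

/-- inversions, recorded by values -/
def invV {N : ℕ} (w : Perm (Fin N)) : Finset (Fin N × Fin N) :=
  Finset.univ.filter fun p => p.1 < p.2 ∧ w⁻¹ p.2 < w⁻¹ p.1

theorem card_invV {N : ℕ} (w : Perm (Fin N)) : (invV w).card = permLength w := by
  unfold invV permLength
  refine Finset.card_bij' (fun p _ => (w⁻¹ p.2, w⁻¹ p.1)) (fun p _ => (w p.2, w p.1)) ?_ ?_ ?_ ?_
  · rintro ⟨a, b⟩ h
    simp at h ⊢
    exact ⟨h.2, h.1⟩
  · rintro ⟨a, b⟩ h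
    simp at h ⊢
    exact ⟨h.2, h.1⟩
  · simp
  · simp

theorem sg_lt {M : ℕ} (i : Fin M) (a b : Fin (M + 1)) :
    sg i b < sg i a ↔ (a = i.castSucc ∧ b = i.succ) ∨
      (b < a ∧ ¬ (b = i.castSucc ∧ a = i.succ)) := by
  simp only [sg, swap_apply_def, Fin.lt_def, Fin.ext_iff]
  split_ifs <;> simp_all [Fin.ext_iff] <;> omega

theorem invV_mul {M : ℕ} (w : Perm (Fin (M + 1))) (i : Fin M) (h : w i.castSucc < w i.succ) :
    invV (w * sg i) = insert (w i.castSucc, w i.succ) (invV w) := by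
  ext ⟨p, q⟩
  obtain ⟨a, rfl⟩ := w.surjective p
  obtain ⟨b, rfl⟩ := w.surjective q
  have := sg_lt i a b
  simp only [invV, Finset.mem_filter, Finset.mem_univ, true_and, mul_inv_rev, Perm.mul_apply,
    Finset.mem_insert, Prod.mk.injEq, inv_app, EmbeddingLike.apply_eq_iff_eq,
    swap_inv] at this ⊢
  rw [show (swap i.castSucc i.succ b < swap i.castSucc i.succ a) ↔ _ from this]
  constructor
  · tauto
  · rintro (⟨rfl, rfl⟩ | ⟨h1, h2⟩)
    · simp [h]
    · refine ⟨h1, Or.inr ⟨h2, ?_⟩⟩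
      rintro ⟨rfl, rfl⟩
      exact absurd h h1.asymm

theorem not_mem_invV {M : ℕ} (w : Perm (Fin (M + 1))) (i : Fin M) :
    (w i.castSucc, w i.succ) ∉ invV w := by
  simp only [invV, Finset.mem_filter, inv_app, not_and, not_lt]
  intro _ _
  exact (Fin.castSucc_lt_succ (i := i)).le

theorem len_up {M : ℕ} (w : Perm (Fin (M + 1))) (i : Fin M) (h : w i.castSucc < w i.succ) :
    permLength (w * sg i) = permLength w + 1 := by
  rw [← card_invV, invV_mul w i h, Finset.card_insert_of_notMem (not_mem_invV w i), card_invV]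

theorem sg_sg {M : ℕ} (w : Perm (Fin (M + 1))) (i : Fin M) : w * sg i * sg i = w := by
  rw [mul_assoc, swap_mul_self, mul_one]

theorem len_down {M : ℕ} (w : Perm (Fin (M + 1))) (i : Fin M) (h : w i.succ < w i.castSucc) :
    permLength (w * sg i) + 1 = permLength w := by
  have := len_up (w * sg i) i (by simpa [sg] using h)
  rw [sg_sg] at this
  exact this.symm

theorem cs_ne {M : ℕ} (i : Fin M) : i.castSucc ≠ i.succ := (Fin.castSucc_lt_succ (i := i)).ne

theorem asc_or {M : ℕ} (w : Perm (Fin (M + 1))) (i : Fin M) :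
    w i.castSucc < w i.succ ∨ w i.succ < w i.castSucc :=
  lt_or_gt_of_ne (fun h => cs_ne i (w.injective h))

theorem len_le {M : ℕ} (w : Perm (Fin (M + 1))) (i : Fin M) :
    permLength (w * sg i) ≤ permLength w + 1 := by
  rcases asc_or w i with h | h
  · exact (len_up w i h).le
  · have := len_down w i h; omega

theorem eq_omega {M : ℕ} (w : Perm (Fin (M + 1)))
    (h : ∀ i : Fin M, w i.succ < w i.castSucc) : w = omegaPerm (M + 1) := by
  have ha : StrictAnti w := Fin.strictAnti_iff_succ_lt.2 h
  have hm : StrictMono (fun i => (w i).rev) := fun a b hab => Fin.rev_lt_rev.2 (ha hab)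
  have : (fun i => (w i).rev) = id := by
    apply (StrictMono.range_inj hm strictMono_id).1
    rw [Set.range_id, Set.range_eq_univ]
    exact Fin.rev_surjective.comp w.surjective
  ext i
  have h1 := congrFun this i
  simp only [id] at h1
  have : w i = i.rev := by rw [← h1, Fin.rev_rev, h1]
  rw [this]; rfl

theorem perm_induct {M : ℕ} {P : Perm (Fin (M + 1)) → Prop} (h0 : P (omegaPerm (M + 1)))
    (hs : ∀ w (i : Fin M), w i.succ < w i.castSucc → P w → P (w * sg i)) : ∀ w, P w := by
  have hb : ∀ w : Perm (Fin (M + 1)),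
      permLength w ≤ Fintype.card (Fin (M + 1) × Fin (M + 1)) := fun w => Finset.card_le_univ _
  suffices H : ∀ k w, Fintype.card (Fin (M + 1) × Fin (M + 1)) ≤ permLength w + k → P w from
    fun w => H _ w (Nat.le_add_left _ _)
  intro k
  induction k with
  | zero =>
    intro w hw
    by_cases h : ∀ i : Fin M, w i.succ < w i.castSucc
    · rw [eq_omega w h]; exact h0
    · push Not at h
      obtain ⟨i, hi⟩ := h
      have h1 := len_up w i (lt_of_le_of_ne hi fun h => cs_ne i (w.injective h))
      have := hb (w * sg i)
      omega
  | succ k ih =>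
    intro w hw
    by_cases h : ∀ i : Fin M, w i.succ < w i.castSucc
    · rw [eq_omega w h]; exact h0
    · push Not at h
      obtain ⟨i, hi⟩ := h
      have h2 := lt_of_le_of_ne hi fun h => cs_ne i (w.injective h)
      have h1 := len_up w i h2
      rw [← sg_sg w i]
      refine hs _ _ (by simpa [sg] using h2) (ih _ (by omega))

section
variable [Field F] {M : ℕ} {β : F}
  {G : Perm (Fin (M + 1)) → (Fin (M + 1) → F) → (Fin (M + 1) → F) → F}

theorem G_step (hG : IsGroth M β G) (w : Perm (Fin (M + 1))) (i : Fin M)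
    (h : w i.succ < w i.castSucc) (x y : Fin (M + 1) → F) (hx : Function.Injective x) :
    G (w * sg i) x y = ((1 + β * x i.succ) * G w x y -
            (1 + β * x i.castSucc) * G w (fun j => x (sg i j)) y) /
          (x i.castSucc - x i.succ) :=
  hG.2 w i x y (len_down w i h) (hx.ne (cs_ne i))

theorem inj_sg {x : Fin (M + 1) → F} (hx : Function.Injective x) (i : Fin M) :
    Function.Injective (fun j => x (sg i j)) := hx.comp (sg i).injective

theorem sub_ne {x : Fin (M + 1) → F} (hx : Function.Injective x) (i : Fin M) :
    x i.castSucc - x i.succ ≠ 0 := sub_ne_zero.2 (hx.ne (cs_ne i))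

theorem ddbar_G (hG : IsGroth M β G) (w : Perm (Fin (M + 1))) (i : Fin M)
    (x y : Fin (M + 1) → F) (hx : Function.Injective x) :
    ddbar β i (fun z => G w z y) x =
      if w i.succ < w i.castSucc then G (w * sg i) x y + β * G w x y else 0 := by
  split_ifs with h
  · rw [G_step hG w i h x y hx]; rfl
  · have h1 := (asc_or w i).resolve_right h
    have h2 : (w * sg i) i.succ < (w * sg i) i.castSucc := by simpa [sg] using h1
    have e1 := G_step hG _ i h2 x y hx
    have e2 := G_step hG _ i h2 _ y (inj_sg hx i)
    rw [sg_sg] at e1 e2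
    have hne := sub_ne hx i
    have hne' : x i.succ - x i.castSucc ≠ 0 := by
      rw [← neg_sub]; exact neg_ne_zero.2 hne
    have e3 : G w (fun j => x (sg i j)) y = G w x y := by
      rw [e1, e2]
      simp only [sg, swap_apply_left, swap_apply_right]
      rw [div_eq_div_iff hne' hne]
      simp only [← Perm.mul_apply, swap_mul_self, Perm.one_apply]
      ring
    simp only [ddbar]
    rw [show (fun j => x (swap i.castSucc i.succ j)) = fun j => x (sg i j) from rfl, e3]
    field_simp
    ring

theorem ddbar_congr (i : Fin M) {f g : (Fin (M + 1) → F) → F}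
    (h : ∀ x, Function.Injective x → f x = g x) (x) (hx : Function.Injective x) :
    ddbar β i f x = ddbar β i g x := by
  simp only [ddbar]
  rw [h x hx, h _ (inj_sg hx i)]

theorem word_congr (L : List (Fin M)) {f g : (Fin (M + 1) → F) → F}
    (h : ∀ x, Function.Injective x → f x = g x) :
    ∀ x, Function.Injective x → ddbarWord β L f x = ddbarWord β L g x := by
  induction L with
  | nil => exact h
  | cons i L ih => exact ddbar_congr i ih

theorem word_append (L : List (Fin M)) (i : Fin M) (f : (Fin (M + 1) → F) → F) :
    ddbarWord β (L ++ [i]) f = ddbarWord β L (ddbar β i f) := by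
  simp [ddbarWord]

theorem ddbar_sum {ι : Type*} (s : Finset ι) (i : Fin M) (k : ι → F)
    (f : ι → (Fin (M + 1) → F) → F) :
    ddbar β i (fun x => ∑ a ∈ s, k a * f a x) = fun x => ∑ a ∈ s, k a * ddbar β i (f a) x := by
  funext x
  simp only [ddbar, Finset.mul_sum, ← Finset.sum_sub_distrib, Finset.sum_div,
    ← Finset.sum_add_distrib]
  refine Finset.sum_congr rfl fun a _ => ?_
  ring

theorem word_sum {ι : Type*} (s : Finset ι) (L : List (Fin M)) (k : ι → F)
    (f : ι → (Fin (M + 1) → F) → F) :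
    ddbarWord β L (fun x => ∑ a ∈ s, k a * f a x) =
      fun x => ∑ a ∈ s, k a * ddbarWord β L (f a) x := by
  induction L with
  | nil => rfl
  | cons i L ih =>
    have : ∀ g : (Fin (M + 1) → F) → F,
      ddbarWord β (i :: L) g = ddbar β i (ddbarWord β L g) := fun _ => rfl
    simp only [this]
    rw [ih, ddbar_sum]

theorem word_zero (L : List (Fin M)) :
    ddbarWord β L (fun _ => (0 : F)) = fun _ => 0 := by
  simpa using word_sum (β := β) (∅ : Finset ℕ) L (fun _ => 0) (fun _ _ => (0:F))

theorem fac (x y : F) (hy : 1 + β * y ≠ 0) :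
    x + negOm β y + β * x * negOm β y = om β x y := by
  unfold negOm om
  rw [eq_div_iff hy]
  have h := div_mul_cancel₀ (-y) hy
  linear_combination (1 + β * x) * h

theorem vanish (hG : IsGroth M β G) (z : Fin (M + 1) → F) (hz : Function.Injective z)
    (hb : ∀ j, 1 + β * z j ≠ 0) (w : Perm (Fin (M + 1))) :
    ∀ u : Perm (Fin (M + 1)), permLength u ≤ permLength w → u ≠ w →
      G w (fun j => z (u j)) (fun j => negOm β (z j)) = 0 := by
  induction w using perm_induct with
  | h0 =>
    intro u _ hu
    rw [hG.1]
    by_contra hne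
    rw [← ne_eq, Finset.prod_ne_zero_iff] at hne
    apply hu
    have hge : ∀ i : Fin (M + 1), M ≤ (u i : ℕ) + i := by
      intro i
      by_contra hlt
      refine hne (i, u i) (by simp; omega) ?_
      simp only
      rw [fac _ _ (hb _)]
      simp [om]
    -- sums of both sides agree
    have hsum : ∑ i : Fin (M + 1), ((u i : ℕ) + i) = ∑ i : Fin (M + 1), M := by
      rw [Finset.sum_add_distrib, Equiv.sum_comp u (fun i : Fin (M + 1) => (i : ℕ)),
        Fin.sum_univ_eq_sum_range (fun i => i), ← mul_two, Finset.sum_range_id_mul_two]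
      simp
    have := (Finset.sum_eq_sum_iff_of_le (fun i _ => hge i)).1 hsum.symm
    ext i
    have h1 := this i (Finset.mem_univ _)
    simp only [omegaPerm, Equiv.coe_fn_mk, Fin.val_rev]
    omega
  | hs w i hd ih =>
    intro u hl hu
    have hlen := len_down w i hd
    have hus := len_le u i
    rw [G_step hG w i hd (fun j => z (u j)) _ (hz.comp u.injective)]
    have h1 := ih u (by omega) (by rintro rfl; omega)
    have h2 := ih (u * sg i) (by omega) (by rintro rfl; exact hu (sg_sg u i).symm)
    simp only [Perm.mul_apply] at h2
    rw [h1, h2]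
    simp

theorem diag (hG : IsGroth M β G) (z : Fin (M + 1) → F) (hz : Function.Injective z)
    (hb : ∀ j, 1 + β * z j ≠ 0) (w : Perm (Fin (M + 1))) :
      G w (fun j => z (w j)) (fun j => negOm β (z j)) = ∏ p ∈ invV w, om β (z p.2) (z p.1) := by
  induction w using perm_induct with
  | h0 =>
    rw [hG.1]
    refine Finset.prod_bij' (fun p _ => (p.2, p.1.rev)) (fun p _ => (p.2.rev, p.1)) ?_ ?_ ?_ ?_ ?_
    · rintro ⟨a, b⟩ h
      simp only [Finset.mem_filter, Finset.mem_univ, true_and, invV] at h ⊢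
      have h2 : ∀ j : Fin (M + 1), (omegaPerm (M + 1))⁻¹ j = j.rev := fun j => rfl
      simp only [h2, Fin.lt_def, Fin.val_rev]
      omega
    · rintro ⟨a, b⟩ h
      simp only [Finset.mem_filter, Finset.mem_univ, true_and, invV] at h ⊢
      have := h.1
      simp only [Fin.lt_def, Fin.val_rev] at this ⊢
      omega
    · simp
    · simp
    · rintro ⟨a, b⟩ h
      rw [fac _ _ (hb _)]
      rfl
  | hs w i hd ih =>
    have hlen := len_down w i hd
    have hv := vanish hG z hz hb w (w * sg i) (by omega) (by intro h; rw [h] at hlen; omega)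
    have hI := invV_mul (w * sg i) i (by simpa [sg] using hd)
    have hn := not_mem_invV (w * sg i) i
    rw [sg_sg] at hI
    rw [hI, Finset.prod_insert hn] at ih
    rw [G_step hG w i hd (fun j => z ((w * sg i) j)) _ (hz.comp (w * sg i).injective), hv]
    simp only [Perm.mul_apply, swap_apply_left, swap_apply_right] at ih ⊢
    simp only [← Perm.mul_apply, swap_mul_self, Perm.one_apply, sg_sg]
    rw [ih]
    have h1 : z (w i.succ) - z (w i.castSucc) ≠ 0 := sub_ne_zero.2 (hz.ne (w.injective.ne (cs_ne i).symm))
    have h2 := hb (w i.succ)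
    rw [om]
    field_simp
    ring

theorem G_id (hG : IsGroth M β G) (z : Fin (M + 1) → F) (hz : Function.Injective z)
    (hb : ∀ j, 1 + β * z j ≠ 0) (w : Perm (Fin (M + 1))) :
      G w z (fun j => negOm β (z j)) = if w = 1 then 1 else 0 := by
  have h1 : invV (1 : Perm (Fin (M + 1))) = ∅ := by
    ext ⟨a, b⟩
    simp [invV]
    exact fun h => h.le
  split_ifs with h
  · subst h
    have := diag hG z hz hb 1
    simpa [h1] using this
  · have := vanish hG z hz hb w 1 (by rw [← card_invV, h1]; simp) (Ne.symm h)
    simpa using this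

theorem len_prod (L : List (Fin M)) :
    permLength (L.map fun i => sg i).prod ≤ L.length := by
  induction L using List.reverseRecOn with
  | nil =>
    simp only [List.map_nil, List.prod_nil, List.length_nil]
    rw [← card_invV, Nat.le_zero, Finset.card_eq_zero]
    ext ⟨a, b⟩
    simp [invV]
    exact fun h => h.le
  | append_singleton L i ih =>
    have := len_le (L.map fun i => sg i).prod i
    simp only [List.map_append, List.map_cons, List.map_nil, List.prod_append, List.prod_cons,
      List.prod_nil, mul_one, List.length_append, List.length_cons, List.length_nil]
    omega

theorem dual (hG : IsGroth M β G) (z : Fin (M + 1) → F) (hz : Function.Injective z)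
    (hb : ∀ j, 1 + β * z j ≠ 0) (L : List (Fin M)) :
    permLength (L.map fun i => sg i).prod = L.length → ∀ w,
      ddbarWord β L (fun x => G w x (fun j => negOm β (z j))) z =
        if w = (L.map fun i => sg i).prod then 1 else 0 := by
  induction L using List.reverseRecOn with
  | nil => exact fun _ w => G_id hG z hz hb w
  | append_singleton L i ih =>
    intro hlen w
    have hp := len_prod L
    simp only [List.map_append, List.map_cons, List.map_nil, List.prod_append, List.prod_cons,
      List.prod_nil, mul_one, List.length_append, List.length_cons, List.length_nil] at hlen ⊢
    set v := (L.map fun i => sg i).prod with hv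
    have hle := len_le v i
    have hasc : v i.castSucc < v i.succ := by
      rcases asc_or v i with h | h
      · exact h
      · have := len_down v i h; omega
    have ih' := ih (by omega)
    rw [word_append, word_congr L (fun x hx => ddbar_G hG w i x _ hx) z hz]
    by_cases hd : w i.succ < w i.castSucc
    · simp only [hd, if_true]
      have e := word_sum (β := β) Finset.univ L (fun b : Bool => if b then (1 : F) else β)
        (fun b x => G (if b then w * sg i else w) x (fun j => negOm β (z j)))
      simp only [Fintype.sum_bool, if_true, one_mul, Bool.false_eq_true, if_false] at e
      rw [e]
      simp only [ih']
      have hwv : w ≠ v := by rintro h; rw [h] at hd; exact absurd hd hasc.asymm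
      have : w * sg i = v ↔ w = v * sg i := by
        constructor
        · rintro h; rw [← h, sg_sg]
        · rintro h; rw [h, sg_sg]
      simp [hwv, this]
    · simp only [hd, if_false]
      rw [word_zero, if_neg]
      rintro rfl
      apply hd
      simpa [sg] using hasc

/-- monomial functions -/
def mon (e : Fin (M + 1) → ℕ) : (Fin (M + 1) → F) → F := fun x => ∏ j, x j ^ e j

/-- functions spanned by monomials with bounded exponents -/
def V (F : Type*) [Field F] {M : ℕ} (d : Fin (M + 1) → ℕ) : Submodule F ((Fin (M + 1) → F) → F) :=
  Submodule.span F (mon '' {e | ∀ j, e j ≤ d j})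

theorem mon_mem {d e : Fin (M + 1) → ℕ} (h : ∀ j, e j ≤ d j) : mon e ∈ V F d :=
  Submodule.subset_span ⟨e, h, rfl⟩

theorem mon_mul (e : Fin (M + 1) → ℕ) (i : Fin (M + 1)) (x : Fin (M + 1) → F) :
    x i * mon e x = mon (e + Pi.single i 1) x := by
  simp only [mon, Pi.add_apply, pow_add, Finset.prod_mul_distrib]
  rw [mul_comm]
  congr 1
  rw [Finset.prod_eq_single i]
  · simp
  · intro b _ hb; simp [hb]
  · simp

theorem V_mono {d d' : Fin (M + 1) → ℕ} (h : ∀ j, d j ≤ d' j) : V F d ≤ V F d' :=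
  Submodule.span_mono (Set.image_mono fun _ he j => (he j).trans (h j))

theorem mul_mem {d : Fin (M + 1) → ℕ} {f : (Fin (M + 1) → F) → F} (hf : f ∈ V F d)
    (i : Fin (M + 1)) : (fun x => x i * f x) ∈ V F (d + Pi.single i 1) := by
  induction hf using Submodule.span_induction with
  | mem f hf =>
    obtain ⟨e, he, rfl⟩ := hf
    simp only [mon_mul]
    exact mon_mem fun j => Nat.add_le_add_right (he j) _
  | zero =>
    convert Submodule.zero_mem (V F (d + Pi.single i 1)) using 1
    funext x; simp
  | add f g _ _ h1 h2 =>
    have := Submodule.add_mem _ h1 h2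
    convert this using 1
    funext x; simp [mul_add]
  | smul a f _ h1 =>
    have := Submodule.smul_mem _ a h1
    convert this using 1
    funext x; simp; ring

theorem mul_mem' {d : Fin (M + 1) → ℕ} {f : (Fin (M + 1) → F) → F} (hf : f ∈ V F d)
    (i : Fin (M + 1)) (a b : F) :
    (fun x => (a + b * x i) * f x) ∈ V F (d + Pi.single i 1) := by
  have h1 := Submodule.smul_mem _ b (mul_mem hf i)
  have h2 := Submodule.smul_mem _ a (V_mono (d' := d + Pi.single i 1) (fun j => by simp) hf)
  convert Submodule.add_mem _ h2 h1 using 1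
  funext x; simp; ring

theorem prod_mem (s : Finset (Fin (M + 1) × Fin (M + 1))) (y : Fin (M + 1) → F) :
    (fun x : Fin (M + 1) → F => ∏ p ∈ s, (x p.1 + y p.2 + β * x p.1 * y p.2)) ∈
      V F (fun i => (s.filter fun p => p.1 = i).card) := by
  induction s using Finset.induction_on with
  | empty =>
    have := mon_mem (F := F) (d := fun i : Fin (M + 1) => 0) (e := 0) (fun j => le_rfl)
    convert this using 1
    · congr 1
    · funext x; simp [mon]
  | insert p s hp ih =>
    have := mul_mem' ih p.1 (y p.2) (1 + β * y p.2)
    convert this using 1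
    · congr 1
      funext i
      rw [Finset.filter_insert]
      by_cases h : p.1 = i
      · subst h
        simp [Finset.card_insert_of_notMem, hp]
      · simp [h, Pi.single_apply, Ne.symm h]
    · funext x
      rw [Finset.prod_insert hp]; ring

/-- divided difference -/
def dd (i : Fin M) (f : (Fin (M + 1) → F) → F) : (Fin (M + 1) → F) → F :=
  fun x => (f x - f (fun j => x (sg i j))) / (x i.castSucc - x i.succ)

/-- exponent vector with the two entries at `i`, `i+1` replaced -/
def upd (e : Fin (M + 1) → ℕ) (i : Fin M) (a b : ℕ) : Fin (M + 1) → ℕ :=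
  Function.update (Function.update e i.castSucc a) i.succ b

theorem mon_upd (e : Fin (M + 1) → ℕ) (i : Fin M) (a b : ℕ) (x : Fin (M + 1) → F) :
    mon (upd e i a b) x = x i.castSucc ^ a * x i.succ ^ b * mon (upd e i 0 0) x := by
  have key : ∀ a b, mon (upd e i a b) x = x i.succ ^ b * (x i.castSucc ^ a *
      ∏ j ∈ (Finset.univ.erase i.succ).erase i.castSucc, x j ^ e j) := by
    intro a b
    rw [mon, ← Finset.mul_prod_erase _ _ (Finset.mem_univ i.succ),
      ← Finset.mul_prod_erase _ _ (Finset.mem_erase.2 ⟨cs_ne i, Finset.mem_univ _⟩)]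
    congr 1
    · simp [upd]
    congr 1
    · simp [upd, Function.update_of_ne (cs_ne i)]
    refine Finset.prod_congr rfl fun j hj => ?_
    simp only [Finset.mem_erase] at hj
    simp [upd, Function.update_of_ne hj.1, Function.update_of_ne hj.2.1]
  rw [key, key]; ring

theorem mon_swap (e : Fin (M + 1) → ℕ) (i : Fin M) (a b : ℕ) (x : Fin (M + 1) → F) :
    mon (upd e i a b) (fun j => x (sg i j)) = mon (upd e i b a) x := by
  simp only [mon]
  rw [← Equiv.prod_comp (sg i)]
  refine Finset.prod_congr rfl fun j _ => ?_
  rw [← Perm.mul_apply, swap_mul_self, Perm.one_apply]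
  congr 1
  have := cs_ne i
  simp only [upd, sg, swap_apply_def, Function.update_apply]
  split_ifs <;> simp_all

theorem upd_self (e : Fin (M + 1) → ℕ) (i : Fin M) : upd e i (e i.castSucc) (e i.succ) = e := by
  simp [upd]

/-- staircase-like functions, on injective points -/
def St (d : Fin (M + 1) → ℕ) (f : (Fin (M + 1) → F) → F) : Prop :=
  ∃ g ∈ V F d, ∀ x, Function.Injective x → f x = g x

theorem dd_aux (e d : Fin (M + 1) → ℕ) (i : Fin M) (b k : ℕ)
    (he : ∀ j, j ≠ i.castSucc → j ≠ i.succ → e j ≤ d j)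
    (h1 : b + k ≤ d i.castSucc + 1) (h2 : b + k ≤ d i.succ + 1) :
    St (F := F) d (dd i (mon (upd e i (b + k) b))) := by
  refine ⟨∑ l ∈ Finset.range k, mon (upd e i (b + l) (b + (k - 1 - l))), ?_, ?_⟩
  · refine Submodule.sum_mem _ fun l hl => mon_mem fun j => ?_
    have hl := Finset.mem_range.1 hl
    simp only [upd, Function.update_apply]
    split_ifs with h3 h4
    · subst h3; omega
    · subst h4; omega
    · exact he j h4 h3
  · intro x hx
    have hne := sub_ne hx i
    simp only [dd, mon_swap, Finset.sum_apply]
    rw [div_eq_iff hne]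
    simp only [mon_upd e i (b + _), mon_upd e i b (b + _), ]
    have := (Commute.all (x i.castSucc) (x i.succ)).geom_sum₂_mul k
    have e1 : ∑ l ∈ Finset.range k, x i.castSucc ^ (b + l) * x i.succ ^ (b + (k - 1 - l)) *
        mon (upd e i 0 0) x = (x i.castSucc ^ b * x i.succ ^ b * mon (upd e i 0 0) x) *
        ∑ l ∈ Finset.range k, x i.castSucc ^ l * x i.succ ^ (k - 1 - l) := by
      rw [Finset.mul_sum]
      exact Finset.sum_congr rfl fun l _ => by ring
    rw [e1, mul_assoc _ (∑ l ∈ Finset.range k, _), this]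
    ring

theorem dd_mon (e d : Fin (M + 1) → ℕ) (i : Fin M)
    (he : ∀ j, j ≠ i.castSucc → j ≠ i.succ → e j ≤ d j)
    (h1 : e i.castSucc ≤ d i.castSucc + 1) (h2 : e i.castSucc ≤ d i.succ + 1)
    (h3 : e i.succ ≤ d i.castSucc + 1) (h4 : e i.succ ≤ d i.succ + 1) :
    St (F := F) d (dd i (mon e)) := by
  rcases le_total (e i.succ) (e i.castSucc) with h | h
  · obtain ⟨k, hk⟩ := Nat.exists_eq_add_of_le h
    have := dd_aux (F := F) e d i (e i.succ) k he (by omega) (by omega)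
    rwa [← hk, upd_self] at this
  · obtain ⟨k, hk⟩ := Nat.exists_eq_add_of_le h
    obtain ⟨g, hg, hg'⟩ := dd_aux (F := F) e d i (e i.castSucc) k he (by omega) (by omega)
    refine ⟨-g, Submodule.neg_mem _ hg, fun x hx => ?_⟩
    rw [Pi.neg_apply, ← hg' x hx, ← hk]
    have e1 := mon_swap e i (e i.succ) (e i.castSucc) x
    have e2 := mon_swap e i (e i.castSucc) (e i.succ) x
    rw [upd_self] at e1 e2
    simp only [dd]
    rw [e1, e2]
    ring

theorem St_add {d : Fin (M + 1) → ℕ} {f g : (Fin (M + 1) → F) → F} (hf : St d f) (hg : St d g) :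
    St d (fun x => f x + g x) := by
  obtain ⟨f', h1, h2⟩ := hf
  obtain ⟨g', h3, h4⟩ := hg
  exact ⟨f' + g', Submodule.add_mem _ h1 h3, fun x hx => by simp [h2 x hx, h4 x hx]⟩

theorem St_smul {d : Fin (M + 1) → ℕ} {f : (Fin (M + 1) → F) → F} (a : F) (hf : St d f) :
    St d (fun x => a * f x) := by
  obtain ⟨f', h1, h2⟩ := hf
  exact ⟨a • f', Submodule.smul_mem _ a h1, fun x hx => by simp [h2 x hx]⟩

/-- `∂^β_i` -/
def pd (β : F) (i : Fin M) (f : (Fin (M + 1) → F) → F) : (Fin (M + 1) → F) → F := fun x =>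
  ((1 + β * x i.succ) * f x - (1 + β * x i.castSucc) * f (fun j => x (sg i j))) /
    (x i.castSucc - x i.succ)

/-- staircase -/
def stair (M : ℕ) : Fin (M + 1) → ℕ := fun j => M - j

theorem pd_St (i : Fin M) {f : (Fin (M + 1) → F) → F} (hf : f ∈ V F (stair M)) :
    St (stair M) (pd β i f) := by
  induction hf using Submodule.span_induction with
  | mem f hf =>
    obtain ⟨e, he, rfl⟩ := hf
    have hi := i.2
    have ha := he i.castSucc
    have hb := he i.succ
    simp only [stair, Fin.val_castSucc, Fin.val_succ] at ha hb
    have h1 : St (F := F) (stair M) (dd i (mon e)) :=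
      dd_mon e _ i (fun j _ _ => he j) (by simp [stair]; omega) (by simp [stair]; omega)
        (by simp [stair]; omega) (by simp [stair]; omega)
    have hs : (e + Pi.single i.succ 1 : Fin (M + 1) → ℕ) i.castSucc = e i.castSucc := by
      simp [Pi.single_apply, cs_ne i]
    have hs' : (e + Pi.single i.succ 1 : Fin (M + 1) → ℕ) i.succ = e i.succ + 1 := by simp
    have h2 : St (F := F) (stair M) (dd i (mon (e + Pi.single i.succ 1))) :=
      dd_mon _ _ i (fun j _ h => by simpa [Pi.single_apply, h] using he j)
        (by rw [hs]; simp [stair]; omega) (by rw [hs]; simp [stair]; omega)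
        (by rw [hs']; simp [stair]; omega) (by rw [hs']; simp [stair]; omega)
    convert St_add h1 (St_smul β h2) using 1
    funext x
    simp only [pd, dd, ← mon_mul, sg, swap_apply_right]
    ring
  | zero => exact ⟨0, Submodule.zero_mem _, fun x _ => by simp [pd]⟩
  | add f g _ _ h1 h2 =>
    convert St_add h1 h2 using 1
    funext x; simp [pd]; ring
  | smul a f _ h1 =>
    convert St_smul a h1 using 1
    funext x; simp [pd]; ring

theorem G_St (hG : IsGroth M β G) (y : Fin (M + 1) → F) (w : Perm (Fin (M + 1))) :
    St (stair M) (fun x => G w x y) := by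
  induction w using perm_induct with
  | h0 =>
    simp only [hG.1]
    refine ⟨_, V_mono ?_ (prod_mem _ y), fun x _ => rfl⟩
    intro i
    calc _ ≤ (Finset.range (M - i)).card := by
          refine Finset.card_le_card_of_injOn (fun p => (p.2 : ℕ)) ?_ ?_
          · rintro ⟨a, b⟩ h
            simp only [Finset.coe_filter, Finset.mem_filter, Finset.mem_univ, true_and,
              Set.mem_ofPred_eq] at h
            obtain ⟨h, rfl⟩ := h
            simp
            omega
          · rintro ⟨a, b⟩ h ⟨a', b'⟩ h' hab
            simp only [Finset.coe_filter, Finset.mem_filter, Finset.mem_univ, true_and,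
              Set.mem_ofPred_eq] at h h'
            simp only [Prod.mk.injEq]
            exact ⟨h.2.trans h'.2.symm, Fin.ext hab⟩
      _ = _ := by simp [stair]
  | hs w i hd ih =>
    obtain ⟨g, hg, hg'⟩ := ih
    obtain ⟨g2, h2, h2'⟩ := pd_St (β := β) i hg
    refine ⟨g2, h2, fun x hx => ?_⟩
    rw [← h2' x hx]
    refine (G_step hG w i hd x y hx).trans ?_
    simp only [pd]
    rw [← hg' x hx, ← hg' _ (inj_sg hx i)]

/-- exponent index set -/
abbrev A (M : ℕ) := (j : Fin (M + 1)) → Fin (M - j + 1)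

theorem card_A (M : ℕ) : Fintype.card (A M) = Fintype.card (Perm (Fin (M + 1))) := by
  rw [Fintype.card_perm, Fintype.card_pi]
  simp only [Fintype.card_fin]
  rw [Fin.prod_univ_eq_prod_range (fun j => M - j + 1), ← Finset.prod_range_add_one_eq_factorial,
    ← Finset.prod_range_reflect]
  refine Finset.prod_congr rfl fun j hj => ?_
  have := Finset.mem_range.1 hj
  omega

theorem St_coeff {f : (Fin (M + 1) → F) → F} (hf : St (stair M) f) :
    ∃ c : A M → F, ∀ x, Function.Injective x → f x = ∑ a, c a * mon (fun j => (a j : ℕ)) x := by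
  obtain ⟨g, hg, h⟩ := hf
  have : (mon '' {e | ∀ j, e j ≤ stair M j} : Set ((Fin (M + 1) → F) → F)) =
      Set.range (fun a : A M => mon (fun j => (a j : ℕ))) := by
    ext f
    constructor
    · rintro ⟨e, he, rfl⟩
      exact ⟨fun j => ⟨e j, Nat.lt_succ_of_le (he j)⟩, rfl⟩
    · rintro ⟨a, rfl⟩
      exact ⟨_, fun j => Nat.le_of_lt_succ (a j).2, rfl⟩
  rw [V, this, Submodule.mem_span_range_iff_exists_fun] at hg
  obtain ⟨c, rfl⟩ := hg
  exact ⟨c, fun x hx => by rw [h x hx]; simp⟩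

theorem main (hG : IsGroth M β G) (z : Fin (M + 1) → F) (hz : Function.Injective z)
    (hb : ∀ j, 1 + β * z j ≠ 0) (L : Perm (Fin (M + 1)) → List (Fin M))
    (hL : ∀ v, IsReducedWord (L v) v) {f : (Fin (M + 1) → F) → F} (hf : St (stair M) f)
    (x : Fin (M + 1) → F) (hx : Function.Injective x) :
    f x = ∑ v, G v x (fun j => negOm β (z j)) * ddbarWord β (L v) f z := by
  set y := fun j => negOm β (z j) with hy
  have hdual : ∀ (k : Perm (Fin (M + 1)) → F) v,
      ddbarWord β (L v) (fun x => ∑ w, k w * G w x y) z = k v := by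
    intro k v
    rw [word_sum]
    have h1 : ∀ w, ddbarWord β (L v) (fun x => G w x y) z = if w = v then 1 else 0 := by
      intro w
      have := dual hG z hz hb (L v) (by rw [(hL v).2]; exact congrArg _ (hL v).1) w
      rw [this]
      have h2 : ((L v).map fun i => sg i).prod = v := (hL v).1
      rw [h2]
    simp [h1]
  choose c hc using fun w => St_coeff (G_St hG y w)
  have hli : LinearIndependent F c := by
    rw [Fintype.linearIndependent_iff]
    intro k hk v
    rw [← hdual k v]
    have h0 : ∀ x, Function.Injective x → ∑ w, k w * G w x y = 0 := by
      intro x hx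
      simp only [fun w => hc w x hx, Finset.mul_sum]
      rw [Finset.sum_comm]
      refine Finset.sum_eq_zero fun a _ => ?_
      have := congrFun hk a
      simp only [Finset.sum_apply, Pi.smul_apply, smul_eq_mul, Pi.zero_apply] at this
      simp only [← mul_assoc]
      rw [← Finset.sum_mul, this, zero_mul]
    rw [word_congr (L v) h0 z hz, word_zero]
  have hsp := hli.span_eq_top_of_card_eq_finrank' (by rw [Module.finrank_fintype_fun_eq_card, card_A])
  obtain ⟨cf, hcf⟩ := St_coeff hf
  have hm : cf ∈ Submodule.span F (Set.range c) := by rw [hsp]; trivial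
  rw [Submodule.mem_span_range_iff_exists_fun] at hm
  obtain ⟨k, hk⟩ := hm
  have hfk : ∀ x, Function.Injective x → f x = ∑ w, k w * G w x y := by
    intro x hx
    rw [hcf x hx, ← hk]
    simp only [fun w => hc w x hx, Finset.mul_sum, Finset.sum_apply, Pi.smul_apply, smul_eq_mul,
      Finset.sum_mul]
    rw [Finset.sum_comm]
    simp only [mul_assoc]
  rw [hfk x hx]
  refine Finset.sum_congr rfl fun v _ => ?_
  rw [word_congr (L v) hfk z hz, hdual, mul_comm]

end

end Cauchy

/-- **Cauchy-type identity** (Theorem `cauchy`): for any `w ∈ S_n` (`n = M+1`),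
`G^β_w(x; ⊖t) = ∑_{v ∈ S_n} G^β_v(x; ⊖z) · ∂̄^β_v G^β_w(z; ⊖t)`,
where `∂̄^β_v` (given by any reduced word of `v`) acts on the `z`-variables. -/
theorem cauchy_identity [Field F] [CharZero F] (M : ℕ) (β : F)
    (x z t : Fin (M + 1) → F)
    (hind : AlgebraicIndependent ℚ
      (Sum.elim (fun _ : Unit => β) (Sum.elim x (Sum.elim z t))))
    (G : Equiv.Perm (Fin (M + 1)) → (Fin (M + 1) → F) → (Fin (M + 1) → F) → F)
    (hG : IsGroth M β G)
    (L : Equiv.Perm (Fin (M + 1)) → List (Fin M))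
    (hL : ∀ v, IsReducedWord (L v) v)
    (w : Equiv.Perm (Fin (M + 1))) :
    G w x (fun j => negOm β (t j)) =
      ∑ v : Equiv.Perm (Fin (M + 1)),
        G v x (fun j => negOm β (z j)) *
          ddbarWord β (L v) (fun z' => G w z' fun j => negOm β (t j)) z := by
  have hinj := hind.injective
  have hx : Function.Injective x := fun a b h => by
    have := @hinj (Sum.inr (Sum.inl a)) (Sum.inr (Sum.inl b)) h
    simpa using this
  have hz : Function.Injective z := fun a b h => by
    have := @hinj (Sum.inr (Sum.inr (Sum.inl a))) (Sum.inr (Sum.inr (Sum.inl b))) h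
    simpa using this
  have hb : ∀ j, 1 + β * z j ≠ 0 := by
    intro j h
    have h1 := (algebraicIndependent_iff.1 hind)
      (1 + MvPolynomial.X (Sum.inl ()) * MvPolynomial.X (Sum.inr (Sum.inr (Sum.inl j))))
      (by simpa using h)
    have h2 := congrArg (MvPolynomial.eval (fun _ => (0 : ℚ))) h1
    simp at h2
  exact Cauchy.main hG z hz hb L hL (Cauchy.G_St hG _ w) x hx
end
end
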